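/- arXiv:0804.2032 — 2 statements merged into one kernel-verified Lean document; each statement's English description precedes it below -/
import Mathlib

section
/- Let D be a digraph on n vertices that has at least one out-branching and contains no useless arcs, and suppose that every vertex of D has in-degree at least 3, or that D is an oriented graph in which every vertex has in-degree at least 2. Then ℓ_s(D) ≥ (1/12)·√n. -/
/-- A (finite, loopless) directed graph, given by its vertex set and arc set. -/
structure DirGraph (V : Type) where
  verts : Set V
  arcs : Set (V × V)

namespace DirGraph

variable {V : Type}

/-- Every arc joins two distinct vertices of the digraph. -/
def WellFormed (D : DirGraph V) : Prop :=
  ∀ a ∈ D.arcs, a.1 ∈ D.verts ∧ a.2 ∈ D.verts ∧ a.1 ≠ a.2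

/-- `T` is a subgraph of `D`. -/
def IsSubgraph (T D : DirGraph V) : Prop :=
  T.verts ⊆ D.verts ∧ T.arcs ⊆ D.arcs

/-- The in-degree of a vertex. -/
noncomputable def inDeg (D : DirGraph V) (v : V) : ℕ :=
  {a ∈ D.arcs | a.2 = v}.ncard

/-- The out-degree of a vertex. -/
noncomputable def outDeg (D : DirGraph V) (v : V) : ℕ :=
  {a ∈ D.arcs | a.1 = v}.ncard

/-- A dipath in `D`: a nonempty list of distinct vertices of `D`,
consecutive ones being joined by arcs of `D`. -/
def IsDipath (D : DirGraph V) (l : List V) : Prop :=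
  l ≠ [] ∧ l.Nodup ∧ (∀ v ∈ l, v ∈ D.verts) ∧
    l.Chain' (fun u v => (u, v) ∈ D.arcs)

/-- `v` is reachable from `u` by a dipath of `D` (in particular,
every vertex of `D` reaches itself). -/
def Reaches (D : DirGraph V) (u v : V) : Prop :=
  ∃ l : List V, D.IsDipath l ∧ l.head? = some u ∧ l.getLast? = some v

/-- `R_D(u)`: the set of vertices reachable from `u` in `D`. -/
def reachSet (D : DirGraph V) (u : V) : Set V := {v | D.Reaches u v}

/-- `T` is an out-tree with root `r`: `r` is the only vertex of in-degree 0,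
every other vertex has in-degree 1, and the underlying graph is a tree
(equivalently, under the degree conditions, every vertex is reachable from `r`). -/
structure IsOutTree (T : DirGraph V) (r : V) : Prop where
  arcs_mem : ∀ a ∈ T.arcs, a.1 ∈ T.verts ∧ a.2 ∈ T.verts
  root_mem : r ∈ T.verts
  root_indeg : T.inDeg r = 0
  indeg_one : ∀ v ∈ T.verts, v ≠ r → T.inDeg v = 1
  reach_root : ∀ v ∈ T.verts, T.Reaches r v

/-- `T` is an out-tree of the digraph `D`, with root `r`. -/
def IsOutTreeOf (T D : DirGraph V) (r : V) : Prop :=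
  T.IsOutTree r ∧ T.IsSubgraph D

/-- `T` is an out-branching (spanning out-tree) of `D`, with root `r`. -/
def IsOutBranching (T D : DirGraph V) (r : V) : Prop :=
  T.IsOutTreeOf D r ∧ T.verts = D.verts

/-- `Leaf(T)`: the vertices of out-degree 0. -/
def leaves (T : DirGraph V) : Set V := {v ∈ T.verts | T.outDeg v = 0}

/-- `Branch(T)`: the vertices of out-degree at least 2. -/
def branchVerts (T : DirGraph V) : Set V := {v ∈ T.verts | 2 ≤ T.outDeg v}

/-- `BrSucc(T)`: the vertices whose in-neighbor in `T` is a branch vertex. -/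
def brSucc (T : DirGraph V) : Set V := {v | ∃ u, (u, v) ∈ T.arcs ∧ 2 ≤ T.outDeg u}

/-- `Head(B)`: the set of heads of the arcs in `B`. -/
def heads (B : Set (V × V)) : Set V := Prod.snd '' B

/-- `Back_D^T(z) = {(u,v) ∈ A(D) : v ≺_T z ⪯_T u}`. -/
def backArcs (D T : DirGraph V) (z : V) : Set (V × V) :=
  {a ∈ D.arcs | (T.Reaches a.2 z ∧ a.2 ≠ z) ∧ T.Reaches z a.1}

/-- The 1-change for `(u,v)`: add the arc `(u,v)` and delete the arc of `T`
with head `v`. -/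
def oneChange (T : DirGraph V) (u v : V) : DirGraph V :=
  ⟨T.verts, {a ∈ T.arcs | a.2 ≠ v} ∪ {(u, v)}⟩

/-- `ℓ(D)`: the maximum number of leaves over all out-trees of `D`. -/
noncomputable def ell (D : DirGraph V) : ℕ :=
  sSup {k | ∃ (T : DirGraph V) (r : V), IsOutTreeOf T D r ∧ (leaves T).ncard = k}

/-- `ℓ_s(D)`: the maximum number of leaves over all out-branchings of `D`. -/
noncomputable def ellS (D : DirGraph V) : ℕ :=
  sSup {k | ∃ (T : DirGraph V) (r : V), IsOutBranching T D r ∧ (leaves T).ncard = k}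

/-- An arc is useless if no out-branching of `D` contains it. -/
def Useless (D : DirGraph V) (a : V × V) : Prop :=
  ∀ (T : DirGraph V) (r : V), IsOutBranching T D r → a ∉ T.arcs

/-- `T` is a 1-optimal out-branching of `D`: no 1-change for an arc of
`A(D) \ A(T)` results in an out-branching with more leaves. -/
def IsOneOptimal (T D : DirGraph V) (r : V) : Prop :=
  IsOutBranching T D r ∧
    ∀ u v : V, (u, v) ∈ D.arcs → (u, v) ∉ T.arcs → v ≠ r →
      ∀ r' : V, IsOutBranching (oneChange T u v) D r' →
        (leaves (oneChange T u v)).ncard ≤ (leaves T).ncard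

/-- `(X, U)` is a tree decomposition of the digraph `D`: `U` is a tree,
every vertex of `D` is in some bag, both endpoints of every arc are in a
common bag, and for every vertex the set of nodes whose bags contain it
induces a subtree (a connected subgraph) of `U`. -/
structure IsTreeDecomp {ι : Type} (D : DirGraph V) (U : SimpleGraph ι) (X : ι → Set V) :
    Prop where
  tree : U.IsTree
  mem_bag : ∀ v ∈ D.verts, ∃ i, v ∈ X i
  arc_bag : ∀ a ∈ D.arcs, ∃ i, a.1 ∈ X i ∧ a.2 ∈ X i
  bag_connected : ∀ (v : V) (i j : ι), v ∈ X i → v ∈ X j →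
    Relation.ReflTransGen (fun x y => U.Adj x y ∧ v ∈ X x ∧ v ∈ X y) i j

/-- The underlying undirected graph of `T`, on the vertex set of `T`. -/
def underlying (T : DirGraph V) : SimpleGraph {v // v ∈ T.verts} :=
  SimpleGraph.fromRel fun a b => ((a : V), (b : V)) ∈ T.arcs

/-- The bag `X_v = {u, v} ∪ BrSucc(T) ∪ Leaf(T) ∪ Head(Back_D^T(v))`,
where `u` is the in-neighbor of `v` in `T` (omitted when `v` is the root). -/
def bag (D T : DirGraph V) (v : V) : Set V :=
  {u | (u, v) ∈ T.arcs} ∪ {v} ∪ brSucc T ∪ leaves T ∪ heads (backArcs D T v)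

/-- The set of arcs of a dipath given as a list of vertices. -/
def listArcs (l : List V) : Set (V × V) := {a | a ∈ l.zip l.tail}

end DirGraph

namespace OutBr
open Relation Finset
open scoped Classical

set_option linter.unusedSectionVars false

variable {α : Type} [Fintype α]

/-- Out-branching given by a parent map. -/
structure Br (A : α → α → Prop) (r : α) (f : α → α) : Prop where
  root : f r = r
  arc : ∀ v, v ≠ r → A (f v) v
  reach : ∀ v, ∃ n, f^[n] v = r

/-- leaves of a parent map. -/
noncomputable def lv (r : α) (f : α → α) : Finset α :=
  Finset.univ.filter (fun v => ∀ w, w ≠ r → f w ≠ v)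

/-- reachability with all vertices after the first avoiding S. -/
def RA (A : α → α → Prop) (S : Finset α) : α → α → Prop :=
  ReflTransGen (fun a b => A a b ∧ b ∉ S)

/-- partial tree -/
structure PT (A : α → α → Prop) (r : α) (C : Finset α) (f : α → α) : Prop where
  rmem : r ∈ C
  root : f r = r
  mem : ∀ v ∈ C, f v ∈ C
  arc : ∀ v ∈ C, v ≠ r → A (f v) v
  reach : ∀ v ∈ C, ∃ n, f^[n] v = r

theorem iter_congr {f g : α → α} {C : Finset α} (hm : ∀ v ∈ C, f v ∈ C)
    (h : ∀ v ∈ C, g v = f v) (n : ℕ) : ∀ v ∈ C, g^[n] v = f^[n] v ∧ f^[n] v ∈ C := by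
  induction n with
  | zero => intro v hv; simpa using hv
  | succ n ih =>
    intro v hv
    rw [Function.iterate_succ_apply, Function.iterate_succ_apply, h v hv]
    exact ih _ (hm v hv)

theorem extend (A : α → α → Prop) (r : α) : ∀ (k : ℕ) (C : Finset α) (f : α → α),
    (Cᶜ).card = k → PT A r C f → ∃ C' f', C ⊆ C' ∧ (∀ v ∈ C, f' v = f v) ∧ PT A r C' f' ∧
      ∀ u ∈ C', ∀ v, A u v → v ∈ C' := by
  intro k
  induction k using Nat.strong_induction_on with
  | _ k ih =>
  intro C f hk hP
  by_cases hcl : ∀ u ∈ C, ∀ v, A u v → v ∈ C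
  · exact ⟨C, f, subset_rfl, fun _ _ => rfl, hP, hcl⟩
  push Not at hcl
  obtain ⟨u, hu, v, huv, hv⟩ := hcl
  have hne : ∀ x ∈ C, x ≠ v := fun x hx h => hv (h ▸ hx)
  have hag : ∀ x ∈ C, Function.update f v u x = f x := fun x hx => by
    rw [Function.update_of_ne (hne x hx)]
  have hP' : PT A r (insert v C) (Function.update f v u) := by
    refine ⟨mem_insert_of_mem hP.rmem, by rw [hag _ hP.rmem, hP.root], ?_, ?_, ?_⟩
    · intro x hx
      rcases mem_insert.1 hx with rfl | hx
      · simp [hu]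
      · rw [hag x hx]; exact mem_insert_of_mem (hP.mem x hx)
    · intro x hx hxr
      rcases mem_insert.1 hx with rfl | hx
      · simpa using huv
      · rw [hag x hx]; exact hP.arc x hx hxr
    · intro x hx
      rcases mem_insert.1 hx with rfl | hx
      · obtain ⟨n, hn⟩ := hP.reach u hu
        refine ⟨n + 1, ?_⟩
        rw [Function.iterate_succ_apply, Function.update_self, (iter_congr hP.mem hag n u hu).1, hn]
      · obtain ⟨n, hn⟩ := hP.reach x hx
        exact ⟨n, by rw [(iter_congr hP.mem hag n x hx).1, hn]⟩
  have hlt : ((insert v C)ᶜ).card < k := by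
    rw [← hk]
    apply Finset.card_lt_card
    rw [Finset.compl_ssubset_compl]
    exact Finset.ssubset_insert hv
  obtain ⟨C', f', h1, h2, h3, h4⟩ := ih _ hlt _ _ rfl hP'
  refine ⟨C', f', (subset_insert _ _).trans h1, ?_, h3, h4⟩
  intro x hx
  rw [h2 x (mem_insert_of_mem hx), hag x hx]

theorem RA.mono {A : α → α → Prop} {S S' : Finset α} (h : S ⊆ S') {u v : α} (hr : RA A S' u v) :
    RA A S u v := by
  induction hr with
  | refl => exact ReflTransGen.refl
  | tail _ hab ih => exact ReflTransGen.tail ih ⟨hab.1, fun hb => hab.2 (h hb)⟩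

theorem RA.reach {A : α → α → Prop} {S : Finset α} {u v : α} (hr : RA A S u v) :
    ReflTransGen A u v := by
  induction hr with
  | refl => exact ReflTransGen.refl
  | tail _ hab ih => exact ReflTransGen.tail ih hab.1

theorem closed_reach {A : α → α → Prop} {C : Finset α} (h : ∀ u ∈ C, ∀ v, A u v → v ∈ C) {u v : α}
    (hu : u ∈ C) (hr : ReflTransGen A u v) : v ∈ C := by
  induction hr with
  | refl => exact hu
  | tail _ hab ih => exact h _ ih _ hab

/-- depth -/
noncomputable def dep (r : α) (f : α → α) (h : ∀ v, ∃ n, f^[n] v = r) (v : α) : ℕ := Nat.find (h v)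

theorem dep_succ {r : α} {f : α → α} (h : ∀ v, ∃ n, f^[n] v = r) {v : α}
    (hv : v ≠ r) : dep r f h v = dep r f h (f v) + 1 := by
  unfold dep
  apply le_antisymm
  · apply Nat.find_min'
    rw [Function.iterate_succ_apply]
    exact Nat.find_spec (h (f v))
  · have h1 := Nat.find_spec (h v)
    rcases hn : Nat.find (h v) with _ | n
    · rw [hn] at h1; exact absurd h1 hv
    · rw [hn, Function.iterate_succ_apply] at h1
      exact Nat.succ_le_succ (Nat.find_min' _ h1)

theorem iter_root {r : α} {f : α → α} (h : f r = r) (n : ℕ) : f^[n] r = r :=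
  Function.iterate_fixed h n

/-- no cycles besides the root -/
theorem Br.acyc {A : α → α → Prop} {r : α} {f : α → α} (hB : Br A r f) {v : α} {n : ℕ} 
    (h : f^[n+1] v = v) : v = r := by
  obtain ⟨m, hm⟩ := hB.reach v
  have h1 : f^[(n+1)*m] v = v := by
    rw [Function.iterate_mul]
    exact Function.iterate_fixed h m
  have h2 : (n+1) * m = n * m + m := by ring
  rw [h2, Function.iterate_add_apply, hm, iter_root hB.root] at h1
  exact h1.symm

theorem antichain {A : α → α → Prop} {r : α} {f : α → α} (hB : Br A r f) (Y : Finset α)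
    (hY : ∀ y ∈ Y, ∀ y' ∈ Y, ∀ n, f^[n] y = y' → y = y') : Y.card ≤ (lv r f).card := by
  have key : ∀ y, ∃ l ∈ lv r f, ∃ n, f^[n] l = y := by
    intro y
    obtain ⟨l, hl, hmax⟩ := Finset.exists_max_image
      (univ.filter (fun l => ∃ n, f^[n] l = y)) (dep r f hB.reach) ⟨y, by simp; exact ⟨0, rfl⟩⟩
    simp only [mem_filter, mem_univ, true_and] at hl hmax
    refine ⟨l, ?_, hl⟩
    simp only [lv, mem_filter, mem_univ, true_and]
    intro w hw hwl
    obtain ⟨n, hn⟩ := hl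
    have := hmax w ⟨n+1, by rw [Function.iterate_succ_apply, hwl, hn]⟩
    rw [dep_succ hB.reach hw, hwl] at this
    omega
  choose g hg1 hg2 using key
  apply Finset.card_le_card_of_injOn g (fun y _ => hg1 y)
  intro y hy y' hy' hgy
  obtain ⟨n, hn⟩ := hg2 y
  obtain ⟨m, hm⟩ := hg2 y'
  rw [hgy] at hn
  rcases le_total n m with h | h
  · obtain ⟨d, rfl⟩ := Nat.exists_eq_add_of_le h
    rw [add_comm, Function.iterate_add_apply, hn] at hm
    exact hY y hy y' hy' d hm
  · obtain ⟨d, rfl⟩ := Nat.exists_eq_add_of_le h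
    rw [add_comm, Function.iterate_add_apply, hm] at hn
    exact (hY y' hy' y hy d hn).symm

theorem nice (A : α → α → Prop) (r : α) (hr : ∀ v, ReflTransGen A r v) (S : Finset α)
    (hrS : r ∉ S) (hS : ∀ s ∈ S, ∃ x, A x s ∧ RA A S r x) :
    ∃ f, Br A r f ∧ S.card ≤ (lv r f).card := by
  obtain ⟨C, f, -, -, hP, hcl⟩ := extend (fun u v => A u v ∧ u ∉ S) r _ {r} (fun _ => r) rfl
    ⟨by simp, rfl, by simp, by simp, by simp; exact ⟨0, rfl⟩⟩
  have hP' : PT A r C f := ⟨hP.rmem, hP.root, hP.mem, fun v hv h => (hP.arc v hv h).1, hP.reach⟩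
  obtain ⟨C', f', hCC, hff, hP2, hcl2⟩ := extend A r _ C f rfl hP'
  have huniv : ∀ v, v ∈ C' := fun v => closed_reach hcl2 hP2.rmem (hr v)
  have hB : Br A r f' := ⟨hP2.root, fun v => hP2.arc v (huniv v), fun v => hP2.reach v (huniv v)⟩
  refine ⟨f', hB, antichain hB S ?_⟩
  have hx : ∀ x, RA A S r x → x ∈ C ∧ x ∉ S := by
    intro x hx
    induction hx with
    | refl => exact ⟨hP.rmem, hrS⟩
    | tail _ hab ih => exact ⟨hcl _ ih.1 _ ⟨hab.1, ih.2⟩, hab.2⟩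
  have hSC : ∀ s ∈ S, s ∈ C := by
    intro s hs
    obtain ⟨x, hxs, hxr⟩ := hS s hs
    exact hcl _ (hx x hxr).1 _ ⟨hxs, (hx x hxr).2⟩
  intro y hy y' hy' n hn
  rcases n with _ | n
  · exact hn
  · exfalso
    rw [(iter_congr hP.mem hff _ y (hSC y hy)).1, Function.iterate_succ_apply'] at hn
    have hmem := (iter_congr hP.mem hff n y (hSC y hy)).2
    by_cases hrr : f^[n] y = r
    · rw [hrr, hP.root] at hn
      exact hrS (hn ▸ hy')
    · have := (hP.arc _ hmem hrr).2
      rw [hn] at this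
      exact this hy'

/-- `W A L r n v`: there is a walk from `r` to `v` with exactly `n` entries into `L`. -/
inductive W (A : α → α → Prop) (L : Finset α) (r : α) : ℕ → α → Prop
  | start : W A L r 0 r
  | out {n u v} : W A L r n u → A u v → v ∉ L → W A L r n v
  | into {n u v} : W A L r n u → A u v → v ∈ L → W A L r (n + 1) v

theorem W_exists {A : α → α → Prop} (L : Finset α) {r v : α} (h : ReflTransGen A r v) :
    ∃ n, W A L r n v := by
  induction h with
  | refl => exact ⟨0, W.start⟩
  | @tail b c _ hab ih =>
    obtain ⟨n, hn⟩ := ih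
    by_cases hc : c ∈ L
    · exact ⟨_, W.into hn hab hc⟩
    · exact ⟨_, W.out hn hab hc⟩

theorem W_avoid {A : α → α → Prop} {L : Finset α} {r : α} {n : ℕ} {v : α} (h : W A L r n v) :
    ∃ Q : Finset α, Q ⊆ L ∧ Q.card ≤ n ∧ RA A (L \ Q) r v := by
  induction h with
  | start => exact ⟨∅, by simp, by simp, ReflTransGen.refl⟩
  | out _ hab hv ih =>
    obtain ⟨Q, h1, h2, h3⟩ := ih
    exact ⟨Q, h1, h2, ReflTransGen.tail h3 ⟨hab, fun h => hv (Finset.mem_sdiff.1 h).1⟩⟩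
  | @into n u v _ hab hv ih =>
    obtain ⟨Q, h1, h2, h3⟩ := ih
    refine ⟨insert v Q, ?_, (card_insert_le _ _).trans (by omega), ?_⟩
    · intro x hx
      rcases mem_insert.1 hx with rfl | hx
      · exact hv
      · exact h1 hx
    · refine ReflTransGen.tail (RA.mono ?_ h3) ⟨hab, ?_⟩
      · intro x hx
        simp only [mem_sdiff, mem_insert] at hx ⊢
        tauto
      · simp

/-- From an out-tree with leaf set `L` rooted at `z` to an out-branching. -/
theorem third (A : α → α → Prop) (r : α) (hr : ∀ v, ReflTransGen A r v)
    (hus : ∀ u v, A u v → ReflTransGen A v r ∨ (r ≠ v ∧ RA A {v} r u))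
    (z : α) (L : Finset α) (hzL : z ∉ L) (hL : ∀ l ∈ L, ∃ x, A x l ∧ RA A L z x) :
    ∃ r' f, Br A r' f ∧ L.card ≤ 3 * (lv r' f).card := by
  by_cases hzr : ReflTransGen A z r
  · obtain ⟨f, hf, hc⟩ := nice A z (fun v => hzr.trans (hr v)) L hzL hL
    exact ⟨z, f, hf, by omega⟩
  have hex : ∀ v, ∃ n, W A L r n v := fun v => W_exists L (hr v)
  set d : α → ℕ := fun v => Nat.find (hex v) with hd
  have dW : ∀ v, W A L r (d v) v := fun v => Nat.find_spec (hex v)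
  have dle : ∀ {n v}, W A L r n v → d v ≤ n := fun {n v} h => Nat.find_min' (hex v) h
  clear_value d
  have dr : d r = 0 := Nat.le_zero.1 (dle W.start)
  have d_out : ∀ {u v}, A u v → v ∉ L → d v ≤ d u := fun {u v} h hv => dle (W.out (dW u) h hv)
  have d_step : ∀ {u v}, A u v → d v ≤ d u + 1 := by
    intro u v h
    by_cases hv : v ∈ L
    · exact dle (W.into (dW u) h hv)
    · exact (d_out h hv).trans (Nat.le_succ _)
  -- vertices reachable from z do not reach r
  have hzn : ∀ {v}, ReflTransGen A z v → ¬ ReflTransGen A v r := fun h h' => hzr (h.trans h')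
  have hLz : ∀ l ∈ L, ReflTransGen A z l := by
    intro l hl
    obtain ⟨x, hxl, hx⟩ := hL l hl
    exact (hx.reach).tail hxl
  have hrL : r ∉ L := fun h => hzr (hLz r h)
  by_cases hcase : 3 * d z ≤ 2 * L.card
  · obtain ⟨Q, hQL, hQc, hQ⟩ := W_avoid (dW z)
    obtain ⟨f, hf, hc⟩ := nice A r hr (L \ Q) (fun h => hrL (mem_sdiff.1 h).1) (by
      intro s hs
      obtain ⟨x, hxs, hx⟩ := hL s (mem_sdiff.1 hs).1
      exact ⟨x, hxs, ReflTransGen.trans hQ (RA.mono sdiff_subset hx)⟩)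
    refine ⟨r, f, hf, ?_⟩
    rw [card_sdiff_of_subset hQL] at hc
    omega
  push Not at hcase
  -- singleton layers
  set Sg : Finset α := L.filter (fun l => d l ≤ d z ∧ ∀ l' ∈ L, d l' = d l → l' = l) with hSg
  have dLpos : ∀ {n v}, W A L r n v → v ∈ L → 1 ≤ n := by
    intro n v h hv
    cases h with
    | start => exact absurd hv hrL
    | out _ _ h => exact absurd hv h
    | into _ _ _ => omega
  -- every layer is nonempty
  have hlayer : ∀ {n v}, W A L r n v → n = d v → ∀ i, 1 ≤ i → i ≤ n → ∃ l ∈ L, d l = i := by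
    intro n v h
    induction h with
    | start => intro _ i h1 h2; omega
    | @out n u v hw hab hv ih =>
      intro hn i h1 h2
      have a1 := dle hw
      have a2 := d_out hab hv
      exact ih (by omega) i h1 h2
    | @into n u v hw hab hv ih =>
      intro hn i h1 h2
      have a1 := dle hw
      have a2 := d_step hab
      rcases Nat.lt_or_ge n i with h | h
      · exact ⟨v, hv, by omega⟩
      · exact ih (by omega) i h1 h
  have hcount : L.card + Sg.card ≥ 2 * d z := by
    have hmap : ∀ l ∈ L.filter (fun l => d l ≤ d z), d l ∈ Finset.Icc 1 (d z) := by
      intro l hl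
      rw [mem_filter] at hl
      exact Finset.mem_Icc.2 ⟨dLpos (dW l) hl.1, hl.2⟩
    have e1 := Finset.card_eq_sum_card_fiberwise (s := L.filter (fun l => d l ≤ d z)) hmap
    have hmap2 : ∀ l ∈ Sg, d l ∈ Finset.Icc 1 (d z) := by
      intro l hl
      rw [hSg, mem_filter] at hl
      exact Finset.mem_Icc.2 ⟨dLpos (dW l) hl.1, hl.2.1⟩
    have e2 := Finset.card_eq_sum_card_fiberwise (s := Sg) hmap2
    have e3 : (L.filter (fun l => d l ≤ d z)).card ≤ L.card := card_filter_le _ _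
    have e4 : ∑ i ∈ Finset.Icc 1 (d z), 2 ≤ ∑ i ∈ Finset.Icc 1 (d z),
        (((L.filter (fun l => d l ≤ d z)).filter (fun l => d l = i)).card +
          (Sg.filter (fun l => d l = i)).card) := by
      apply Finset.sum_le_sum
      intro i hi
      rw [Finset.mem_Icc] at hi
      obtain ⟨l, hl, hli⟩ := hlayer (dW z) rfl i hi.1 hi.2
      have hlm : l ∈ (L.filter (fun l => d l ≤ d z)).filter (fun l => d l = i) := by
        simp only [mem_filter]; exact ⟨⟨hl, by omega⟩, hli⟩
      by_cases hs : l ∈ Sg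
      · have : 0 < (Sg.filter (fun l => d l = i)).card :=
          card_pos.2 ⟨l, mem_filter.2 ⟨hs, hli⟩⟩
        have : 0 < ((L.filter (fun l => d l ≤ d z)).filter (fun l => d l = i)).card :=
          card_pos.2 ⟨l, hlm⟩
        omega
      · have : ∃ l' ∈ L, d l' = d l ∧ l' ≠ l := by
          by_contra hcon
          push Not at hcon
          exact hs (mem_filter.2 ⟨hl, by omega, hcon⟩)
        obtain ⟨l', hl', hdl, hne⟩ := this
        have : 1 < ((L.filter (fun l => d l ≤ d z)).filter (fun l => d l = i)).card := by
          apply Finset.one_lt_card.2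
          refine ⟨l, hlm, l', ?_, hne.symm⟩
          simp only [mem_filter]; exact ⟨⟨hl', by omega⟩, by omega⟩
        omega
    rw [Finset.sum_add_distrib, ← e1, ← e2] at e4
    simp at e4
    omega
  -- walks avoiding a singleton layer stay below it
  have hbelow : ∀ l ∈ Sg, ∀ v, RA A {l} r v → d v < d l := by
    intro l hl v hv
    have hl' := mem_filter.1 hl
    have hpos := dLpos (dW l) hl'.1
    induction hv with
    | refl => omega
    | @tail b c _ hab ih =>
      by_contra hcon
      have hs := d_step hab.1
      have hcL : c ∈ L := by
        by_contra hc
        have := d_out hab.1 hc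
        omega
      have := hl'.2.2 c hcL (by omega)
      exact hab.2 (by simp [this])
  -- the vertices y
  have hyex : ∀ l ∈ Sg, ∃ y' y, A y' y ∧ y ∉ L ∧ ReflTransGen A z y ∧ d l ≤ d y' ∧ 
      d y + 1 = d l := by
    intro l hl
    have hl' := mem_filter.1 hl
    obtain ⟨x, hxl, hx⟩ := hL l hl'.1
    have hdx : d x < d l := by
      rcases hus x l hxl with h | h
      · exact absurd h (hzn (hLz l hl'.1))
      · exact hbelow l hl x h.2
    have hdx2 := d_step hxl
    have key : d l ≤ d x ∨ ∃ y' y, A y' y ∧ y ∉ L ∧ ReflTransGen A z y ∧ d l ≤ d y' ∧ 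
        d y < d l ∧ d x ≤ d y := by
      clear hdx hdx2 hxl
      induction hx with
      | refl => exact Or.inl hl'.2.1
      | @tail b c hb hab ih =>
        have hc := d_out hab.1 hab.2
        rcases ih with h | ⟨y', y, h1, h2, h3, h4, h5, h6⟩
        · by_cases hlc : d l ≤ d c
          · exact Or.inl hlc
          · exact Or.inr ⟨b, c, hab.1, hab.2, (RA.reach hb).tail hab.1, h, by omega, le_rfl⟩
        · exact Or.inr ⟨y', y, h1, h2, h3, h4, h5, by omega⟩
    rcases key with h | ⟨y', y, h1, h2, h3, h4, h5, h6⟩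
    · omega
    · exact ⟨y', y, h1, h2, h3, h4, by omega⟩
  choose! y' y hyA hyL hyz hy' hyd using hyex
  set Y := Sg.image y with hY
  have hYd : ∀ v ∈ Y, ∃ l ∈ Sg, v = y l := by
    intro v hv
    obtain ⟨l, hl, h⟩ := mem_image.1 hv
    exact ⟨l, hl, h.symm⟩
  have hSgd : ∀ l ∈ Sg, ∀ l' ∈ L, d l' = d l → l' = l := fun l hl => (mem_filter.1 hl).2.2
  have hSgL : ∀ l ∈ Sg, l ∈ L := fun l hl => (mem_filter.1 hl).1
  have hYcard : Y.card = Sg.card := by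
    apply card_image_of_injOn
    intro l hl l' hl' he
    have a := hyd l hl
    have b := hyd l' hl'
    have he' : y l = y l' := he
    rw [he'] at a
    exact hSgd l' hl' l (hSgL l hl) (by omega)
  have hYL : ∀ v ∈ Y, v ∉ L := by
    intro v hv
    obtain ⟨l, hl, rfl⟩ := hYd v hv
    exact hyL l hl
  have hrY : r ∉ Y := by
    intro h
    obtain ⟨l, hl, he⟩ := hYd r h
    exact hzr (he ▸ hyz l hl)
  -- level walk
  have hlev : ∀ j, (∀ v, (v ∈ L ∨ v = r) → d v = j → RA A Y r v) → ∀ {n v}, W A L r n v →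
      n = d v → d v = j → RA A Y r v ∨ ∃ w ∈ Y, d w = j ∧ ∃ x, A x w ∧ RA A Y r x := by
    intro j ih n v h
    induction h with
    | start => intro _ _; exact Or.inl ReflTransGen.refl
    | @out n u v hw hab hv ih2 =>
      intro hn hj
      have a1 := dle hw
      have a2 := d_out hab hv
      rcases ih2 (by omega) (by omega) with h | h
      · by_cases hvY : v ∈ Y
        · exact Or.inr ⟨v, hvY, hj, u, hab, h⟩
        · exact Or.inl (ReflTransGen.tail h ⟨hab, hvY⟩)
      · exact Or.inr h
    | @into n u v hw hab hv _ =>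
      intro hn hj
      exact Or.inl (ih v (Or.inl hv) hj)
  have hgood : ∀ j v, (v ∈ L ∨ v = r) → d v = j → RA A Y r v := by
    intro j
    induction j with
    | zero =>
      rintro v (hv | rfl) hj
      · have := dLpos (dW v) hv; omega
      · exact ReflTransGen.refl
    | succ j ih =>
      rintro v (hv | rfl) hj
      swap
      · exact ReflTransGen.refl
      by_cases hyj : ∃ l ∈ Sg, d (y l) = j
      · obtain ⟨l, hl, hlj⟩ := hyj
        have h1 := hyd l hl
        have hvl : v = l := hSgd l hl v hv (by omega)
        subst hvl
        have huse : RA A {y v} r (y' v) := by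
          rcases hus _ _ (hyA v hl) with h | h
          · exact absurd h (hzn (hyz v hl))
          · exact h.2
        have hyuniq : ∀ w ∈ Y, d w = j → w = y v := by
          intro w hw hwj
          obtain ⟨l', hl', rfl⟩ := hYd w hw
          have := hyd l' hl'
          rw [hSgd v hl l' (hSgL l' hl') (by omega)]
        have key : ∀ w, RA A {y v} r w → (d w ≤ j ∧ (d w = j → RA A Y r w)) ∨ RA A Y r v := by
          intro w hw
          induction hw with
          | refl => exact Or.inl ⟨by omega, fun _ => ReflTransGen.refl⟩
          | @tail b c _ hab ih2 =>
            rcases ih2 with ⟨h2, h3⟩ | h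
            swap
            · exact Or.inr h
            have hs := d_step hab.1
            by_cases hcj : d c ≤ j
            · left
              refine ⟨hcj, fun hcj' => ?_⟩
              by_cases hcL : c ∈ L
              · exact ih c (Or.inl hcL) hcj'
              · have := d_out hab.1 hcL
                refine ReflTransGen.tail (h3 (by omega)) ⟨hab.1, fun hcY => ?_⟩
                exact hab.2 (by simp [hyuniq c hcY hcj'])
            · right
              have hcL : c ∈ L := by
                by_contra hc
                have := d_out hab.1 hc
                omega
              have hcv : c = v := hSgd v hl c hcL (by omega)
              subst hcv
              exact ReflTransGen.tail (h3 (by omega)) ⟨hab.1, fun hcY => hYL _ hcY hcL⟩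
        rcases key _ huse with h | h
        · have := hy' v hl
          omega
        · exact h
      · have hw := dW v
        generalize hnn : d v = n at hw
        cases hw with
        | start => exact ReflTransGen.refl
        | out _ _ h => exact absurd hv h
        | @into n u _ hw hab _ =>
          have a1 := dle hw
          have a2 := d_step hab
          have hu : n = d u := by omega
          rcases hlev j ih hw hu (by omega) with h | ⟨w, hw, hwj, _⟩
          · exact ReflTransGen.tail h ⟨hab, fun hvY => hYL _ hvY hv⟩
          · obtain ⟨l, hl, rfl⟩ := hYd w hw
            exact absurd ⟨l, hl, hwj⟩ hyj
  have hRAY : ∀ v, RA A Y r v → v ∉ Y := by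
    intro v hv
    cases hv with
    | refl => exact hrY
    | tail _ h => exact h.2
  obtain ⟨f, hf, hc⟩ := nice A r hr Y hrY (by
    intro s hs
    obtain ⟨l, hl, rfl⟩ := hYd s hs
    rcases hlev (d (y l)) (hgood _) (dW (y l)) rfl rfl with h | ⟨w, hw, hwj, x, hx⟩
    · exact absurd hs (hRAY _ h)
    · obtain ⟨l', hl', rfl⟩ := hYd w hw
      have b1 := hyd l hl
      have b2 := hyd l' hl'
      have : l' = l := hSgd l hl l' (hSgL l' hl') (by omega)
      subst this
      exact ⟨x, hx⟩)
  exact ⟨r, f, hf, by omega⟩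

theorem comb (N : ℕ) (q : ℕ → ℕ) (hq : ∀ i, 1 ≤ i → i ≤ N → q i = 0 ∨ q i + 2 ≤ i) :
    ∃ L : Finset ℕ, L ⊆ Finset.Icc 1 N ∧ N ≤ 10 * L.card + 2 ∧
      ∀ i, 1 ≤ i → i ≤ N → q i ∈ L → i + 1 ≤ N ∧ i + 1 ∉ L ∧ q (i + 1) ∉ L := by
  set J : ℕ → Finset ℕ := fun i => (Finset.Icc 1 N).filter (fun i' => q i' = i) with hJ
  have memJ : ∀ i i', i' ∈ J i ↔ (1 ≤ i' ∧ i' ≤ N) ∧ q i' = i := by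
    intro i i'; simp [hJ]
  set A0 := (Finset.Icc 1 N).filter (fun i => (J i).card ≤ 1 ∧ i ≠ q N) with hA0
  -- conflicts
  set c : ℕ → ℕ → Prop := fun i j => ∃ i', 1 ≤ i' ∧ i' ≤ N ∧ q i' = i ∧
    (j = i' + 1 ∨ (i' + 1 ≤ N ∧ j = q (i' + 1))) with hc
  have hA0m : ∀ i ∈ A0, 1 ≤ i ∧ i ≤ N ∧ (J i).card ≤ 1 ∧ i ≠ q N := by
    intro i hi
    have := mem_filter.1 hi
    exact ⟨(Finset.mem_Icc.1 this.1).1, (Finset.mem_Icc.1 this.1).2, this.2⟩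
  have Juniq : ∀ i ∈ A0, ∀ a b, a ∈ J i → b ∈ J i → a = b := by
    intro i hi a b ha hb
    exact Finset.card_le_one.1 (hA0m i hi).2.2.1 a ha b hb
  have hself : ∀ i ∈ A0, ¬ c i i := by
    rintro i hi ⟨i', h1, h2, h3, h4⟩
    have := hA0m i hi
    rcases h4 with h4 | ⟨h4, h5⟩
    · have := hq i' h1 h2; omega
    · have := Juniq i hi i' (i'+1) ((memJ _ _).2 ⟨⟨h1, h2⟩, h3⟩)
        ((memJ _ _).2 ⟨⟨by omega, h4⟩, h5.symm⟩)
      omega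
  -- maximal independent set
  obtain ⟨L, hLm, hLmax⟩ := Finset.exists_max_image
    (A0.powerset.filter (fun L => ∀ i ∈ L, ∀ j ∈ L, ¬ c i j)) Finset.card
    ⟨∅, by simp⟩
  simp only [mem_filter, mem_powerset] at hLm hLmax
  obtain ⟨hLA, hLi⟩ := hLm
  choose! ι hι using (fun i (h : (J i).Nonempty) => h)
  have hcov : A0 ⊆ L ∪ (L.image (fun i => ι i + 1) ∪ (L.image (fun i => q (ι i + 1)) ∪
      (L.image (fun j => q (j - 1)) ∪ L.image (fun j => q (ι j - 1))))) := by
    intro x hx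
    by_cases hxL : x ∈ L
    · exact mem_union_left _ hxL
    have hcon : ∃ l ∈ L, c l x ∨ c x l := by
      by_contra hcon
      push Not at hcon
      have := hLmax (insert x L) ⟨insert_subset hx hLA, by
        intro i hi j hj
        rcases mem_insert.1 hi with hi | hi <;> rcases mem_insert.1 hj with hj | hj
        · rw [hi, hj]; exact hself _ hx
        · rw [hi]; exact (hcon j hj).2
        · rw [hj]; exact (hcon i hi).1
        · exact hLi i hi j hj⟩
      rw [card_insert_of_notMem hxL] at this
      omega
    simp only [mem_union, mem_image]
    right
    obtain ⟨l, hl, ⟨i', h1, h2, h3, h4⟩ | ⟨i', h1, h2, h3, h4⟩⟩ := hcon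
    · have hm : i' ∈ J l := (memJ _ _).2 ⟨⟨h1, h2⟩, h3⟩
      have hi : ι l = i' := Juniq l (hLA hl) _ _ (hι l ⟨i', hm⟩) hm
      rcases h4 with h4 | ⟨_, h4⟩
      · left; exact ⟨l, hl, by rw [hi, h4]⟩
      · right; left; exact ⟨l, hl, by rw [hi, h4]⟩
    · rcases h4 with h4 | ⟨h5, h4⟩
      · right; right; left; exact ⟨l, hl, by rw [h4]; simpa using h3⟩
      · have hm : i' + 1 ∈ J l := (memJ _ _).2 ⟨⟨by omega, h5⟩, h4.symm⟩
        have hi : ι l = i' + 1 := Juniq l (hLA hl) _ _ (hι l ⟨_, hm⟩) hm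
        right; right; right; exact ⟨l, hl, by rw [hi]; simpa using h3⟩
  have hA5 : A0.card ≤ 5 * L.card := by
    refine (card_le_card hcov).trans ?_
    refine (card_union_le _ _).trans ?_
    have b1 := card_union_le (L.image (fun i => ι i + 1)) (L.image (fun i => q (ι i + 1)) ∪
      (L.image (fun j => q (j - 1)) ∪ L.image (fun j => q (ι j - 1))))
    have b2 := card_union_le (L.image (fun i => q (ι i + 1)))
      (L.image (fun j => q (j - 1)) ∪ L.image (fun j => q (ι j - 1)))
    have b3 := card_union_le (L.image (fun j => q (j - 1))) (L.image (fun j => q (ι j - 1)))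
    have c1 := card_image_le (s := L) (f := fun i => ι i + 1)
    have c2 := card_image_le (s := L) (f := fun i => q (ι i + 1))
    have c3 := card_image_le (s := L) (f := fun j => q (j - 1))
    have c4 := card_image_le (s := L) (f := fun j => q (ι j - 1))
    omega
  have hNA : N ≤ 2 * A0.card + 2 := by
    set Bg := (Finset.Icc 1 N).filter (fun i => ¬ (J i).card ≤ 1) with hBg
    have e1 : 2 * Bg.card ≤ N := by
      have : ∑ i ∈ Bg, 2 ≤ ∑ i ∈ Bg, (J i).card := by
        apply Finset.sum_le_sum
        intro i hi
        have := (mem_filter.1 hi).2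
        omega
      have h2 : ∑ i ∈ Bg, (J i).card = (Bg.biUnion J).card := by
        rw [Finset.card_biUnion]
        intro a _ b _ hab
        refine Finset.disjoint_left.2 ?_
        intro x hxa hxb
        exact hab (((memJ _ _).1 hxa).2.symm.trans ((memJ _ _).1 hxb).2)
      have h3 : (Bg.biUnion J).card ≤ (Finset.Icc 1 N).card := by
        apply card_le_card
        intro x hx
        obtain ⟨a, _, ha⟩ := mem_biUnion.1 hx
        exact (mem_filter.1 ha).1
      simp at this h3
      omega
    have e2 : (Finset.Icc 1 N) ⊆ A0 ∪ (Bg ∪ {q N}) := by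
      intro i hi
      simp only [hA0, hBg, mem_union, mem_filter, mem_singleton]
      tauto
    have e3 := card_le_card e2
    have e4 := card_union_le A0 (Bg ∪ {q N})
    have e5 := card_union_le Bg {q N}
    rw [Nat.card_Icc] at e3
    rw [card_singleton] at e5
    omega
  refine ⟨L, hLA.trans (filter_subset _ _), by omega, ?_⟩
  intro i h1 h2 hqi
  have hne : i ≠ N := by
    rintro rfl
    exact (hA0m _ (hLA hqi)).2.2.2 rfl
  refine ⟨by omega, fun h => ?_, fun h => ?_⟩
  · exact hLi _ hqi _ h ⟨i, h1, h2, rfl, Or.inl rfl⟩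
  · exact hLi _ hqi _ h ⟨i, h1, h2, rfl, Or.inr ⟨by omega, rfl⟩⟩

/-- vertices with a sibling -/
noncomputable def bs (r : α) (f : α → α) : Finset α :=
  Finset.univ.filter (fun v => v ≠ r ∧ ∃ w, w ≠ v ∧ w ≠ r ∧ f w = f v)

theorem bs_card (r : α) (f : α → α) :
    (bs r f).card + 2 ≤ 2 * (lv r f).card := by
  set NL := (Finset.univ : Finset α) \ lv r f with hNL
  have hmap : ∀ v ∈ (Finset.univ : Finset α).erase r, f v ∈ NL := by
    intro v hv
    simp only [hNL, lv, mem_sdiff, mem_univ, true_and, mem_filter]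
    intro h
    exact h v (ne_of_mem_erase hv) rfl
  have hmap2 : ∀ v ∈ bs r f, f v ∈ NL := by
    intro v hv
    exact hmap v (mem_erase.2 ⟨(mem_filter.1 hv).2.1, mem_univ _⟩)
  have e1 := Finset.card_eq_sum_card_fiberwise hmap
  have e2 := Finset.card_eq_sum_card_fiberwise hmap2
  have e3 : ∑ w ∈ NL, (((bs r f).filter (fun v => f v = w)).card + 2) ≤
      ∑ w ∈ NL, (2 * ((Finset.univ.erase r).filter (fun v => f v = w)).card) := by
    apply Finset.sum_le_sum
    intro w hw
    have hsub : (bs r f).filter (fun v => f v = w) ⊆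
        (Finset.univ.erase r).filter (fun v => f v = w) := by
      intro v hv
      rw [mem_filter] at hv ⊢
      exact ⟨mem_erase.2 ⟨(mem_filter.1 hv.1).2.1, mem_univ _⟩, hv.2⟩
    have hle := card_le_card hsub
    have hpos : ∃ v, v ≠ r ∧ f v = w := by
      simp only [hNL, lv, mem_sdiff, mem_univ, true_and, mem_filter] at hw
      push Not at hw
      exact hw
    obtain ⟨v, hvr, hvw⟩ := hpos
    have hvm : v ∈ (Finset.univ.erase r).filter (fun v => f v = w) := by
      simp [hvr, hvw]
    have h1 := card_pos.2 ⟨v, hvm⟩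
    rcases Finset.eq_empty_or_nonempty ((bs r f).filter (fun v => f v = w)) with h | ⟨x, hx⟩
    · rw [h, card_empty]; omega
    · have : 1 < ((Finset.univ.erase r).filter (fun v => f v = w)).card := by
        rw [mem_filter] at hx
        obtain ⟨hxr, y, hyx, hyr, hy⟩ := (mem_filter.1 hx.1).2
        apply Finset.one_lt_card.2
        exact ⟨x, by simp [hxr, hx.2], y, by simp [hyr, hy, hx.2], hyx.symm⟩
      omega
  rw [Finset.sum_add_distrib, ← Finset.mul_sum, ← e1, ← e2] at e3
  simp only [sum_const, smul_eq_mul] at e3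
  have e4 : NL.card = Fintype.card α - (lv r f).card := by
    rw [hNL, card_sdiff_of_subset (subset_univ _), card_univ]
  have e5 : (Finset.univ.erase r).card = Fintype.card α - 1 := by
    rw [card_erase_of_mem (mem_univ _), card_univ]
  have e6 : (lv r f).card ≤ Fintype.card α := card_le_univ _
  have e7 : 0 < Fintype.card α := Fintype.card_pos_iff.2 ⟨r⟩
  omega

/-- Rerouting a set of vertices `H` to the common parent `u`. -/
theorem reroute {A : α → α → Prop} {r : α} {f : α → α} (hB : Br A r f) (u : α) (H : Finset α)
    (hA : ∀ v ∈ H, A u v) (hanc : ∀ v ∈ H, ∀ n, f^[n] u ≠ v) :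
    Br A r (fun v => if v ∈ H then u else f v) := by
  have hrH : r ∉ H := by
    intro h
    obtain ⟨n, hn⟩ := hB.reach u
    exact hanc r h n hn
  have hu : ∀ n, (fun v => if v ∈ H then u else f v)^[n] u = f^[n] u := by
    intro n
    induction n with
    | zero => rfl
    | succ n ih =>
      rw [Function.iterate_succ_apply', Function.iterate_succ_apply', ih]
      exact if_neg (fun h => hanc _ h n rfl)
  refine ⟨by simp [hrH, hB.root], ?_, ?_⟩
  · intro v hv
    by_cases h : v ∈ H
    · simp only [h, if_true]; exact hA v h
    · simp only [h, if_false]; exact hB.arc v hv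
  · intro v
    obtain ⟨n, hn⟩ := hB.reach v
    induction n generalizing v with
    | zero => exact ⟨0, hn⟩
    | succ n ih =>
      by_cases h : v ∈ H
      · obtain ⟨m, hm⟩ := hB.reach u
        refine ⟨m + 1, ?_⟩
        rw [Function.iterate_succ_apply, if_pos h, hu, hm]
      · obtain ⟨m, hm⟩ := ih (f v) hn
        refine ⟨m + 1, ?_⟩
        rw [Function.iterate_succ_apply, if_neg h, hm]

/-- the improving arcs from `u` -/
noncomputable def Hs (A : α → α → Prop) (r : α) (f : α → α) (u : α) : Finset α :=
  Finset.univ.filter (fun v => A u v ∧ (∀ n, f^[n] u ≠ v) ∧ v ∉ bs r f ∧ f v ≠ u)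

theorem Hs_card {A : α → α → Prop} {r : α} {f : α → α} (hB : Br A r f)
    (hopt : ∀ r' f', Br A r' f' → (lv r' f').card ≤ (lv r f).card) (u : α) :
    (Hs A r f u).card ≤ if u ∈ lv r f then 1 else 0 := by
  have hm : ∀ v ∈ Hs A r f u, A u v ∧ (∀ n, f^[n] u ≠ v) ∧ v ∉ bs r f ∧ f v ≠ u := by
    intro v hv; simpa [Hs] using hv
  have hne : ∀ v ∈ Hs A r f u, v ≠ r := by
    rintro v hv rfl
    obtain ⟨n, hn⟩ := hB.reach u
    exact (hm _ hv).2.1 n hn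
  have hsib : ∀ v ∈ Hs A r f u, ∀ w, w ≠ r → f w = f v → w = v := by
    intro v hv w hwr hw
    by_contra hwv
    exact (hm v hv).2.2.1 (by simp [bs]; exact ⟨hne v hv, w, hwv, hwr, hw⟩)
  have hB' := reroute hB u (Hs A r f u) (fun v hv => (hm v hv).1) (fun v hv => (hm v hv).2.1)
  have hle := hopt _ _ hB'
  have hsub : ((lv r f).erase u) ∪ (Hs A r f u).image f ⊆
      lv r (fun v => if v ∈ Hs A r f u then u else f v) := by
    intro x hx
    simp only [lv, mem_filter, mem_univ, true_and]
    intro w hw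
    rcases mem_union.1 hx with hx | hx
    · have hx2 := (mem_filter.1 (mem_erase.1 hx).2).2
      split_ifs
      · exact (mem_erase.1 hx).1.symm
      · exact hx2 w hw
    · obtain ⟨v, hv, rfl⟩ := mem_image.1 hx
      split_ifs with hwH
      · exact (hm v hv).2.2.2.symm
      · intro hwv
        exact hwH (hsib v hv w hw hwv ▸ hv)
  have hdisj : Disjoint ((lv r f).erase u) ((Hs A r f u).image f) := by
    rw [Finset.disjoint_left]
    intro x hx hx'
    obtain ⟨v, hv, rfl⟩ := mem_image.1 hx'
    exact (mem_filter.1 (mem_erase.1 hx).2).2 v (hne v hv) rfl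
  have hinj : ((Hs A r f u).image f).card = (Hs A r f u).card := by
    apply card_image_of_injOn
    intro a ha b hb hab
    exact hsib b hb a (hne a ha) hab
  have h1 := card_le_card hsub
  rw [card_union_of_disjoint hdisj, hinj] at h1
  split_ifs with hu
  · rw [card_erase_of_mem hu] at h1
    have := card_pos.2 ⟨u, hu⟩
    omega
  · rw [erase_eq_of_notMem hu] at h1
    omega

theorem Br.reaches {A : α → α → Prop} {r : α} {f : α → α} (hB : Br A r f) (v : α) :
    ReflTransGen A r v := by
  obtain ⟨n, hn⟩ := hB.reach v
  induction n generalizing v with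
  | zero => rw [show v = r from hn]
  | succ n ih =>
    by_cases hv : v = r
    · rw [hv]
    · exact (ih (f v) hn).tail (hB.arc v hv)

theorem core (A : α → α → Prop) (hirr : ∀ v, ¬ A v v) (r0 : α) (hr0 : ∀ v, ReflTransGen A r0 v)
    (hus : ∀ r, (∀ v, ReflTransGen A r v) → ∀ u v, A u v →
      ReflTransGen A v r ∨ (r ≠ v ∧ RA A {v} r u))
    (hdeg : ∀ v x y, A v y → ∃ u, A u v ∧ u ≠ x ∧ u ≠ y) :
    ∃ r f, Br A r f ∧ Fintype.card α ≤ 144 * (lv r f).card ^ 2 := by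
  obtain ⟨f0, hf0, -⟩ := nice A r0 hr0 ∅ (by simp) (by simp)
  obtain ⟨⟨r, f⟩, hB, hmax⟩ := Finset.exists_max_image
    ((Finset.univ : Finset (α × (α → α))).filter (fun p => Br A p.1 p.2))
    (fun p => (lv p.1 p.2).card) ⟨(r0, f0), by simp [hf0]⟩
  simp only [mem_filter, mem_univ, true_and] at hB hmax
  have hopt : ∀ r' f', Br A r' f' → (lv r' f').card ≤ (lv r f).card :=
    fun r' f' h => hmax (r', f') h
  refine ⟨r, f, hB, ?_⟩
  by_contra hbig
  push Not at hbig
  set k := (lv r f).card with hk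
  have hbs := bs_card r f
  rw [← hk] at hbs
  have hk1 : 1 ≤ k := by omega
  set E := (lv r f).biUnion (Hs A r f) with hE
  have hEc : E.card ≤ k := by
    have := Finset.card_biUnion_le_card_mul (lv r f) (Hs A r f) 1 (by
      intro u hu
      have := Hs_card hB hopt u
      rwa [if_pos hu] at this)
    rw [mul_one] at this
    exact this
  have hHE : ∀ u, Hs A r f u ⊆ E := by
    intro u
    by_cases hu : u ∈ lv r f
    · exact Finset.subset_biUnion_of_mem (Hs A r f) hu
    · have := Hs_card hB hopt u
      rw [if_neg hu] at this
      rw [Finset.card_eq_zero.1 (Nat.le_zero.1 this)]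
      simp
  set Hd := insert r (bs r f ∪ E) with hHd
  have hHdc : Hd.card ≤ 3 * k := by
    have h1 : Hd.card ≤ (bs r f ∪ E).card + 1 := card_insert_le r (bs r f ∪ E)
    have h2 := card_union_le (bs r f) E
    omega
  have hr_notin : ∀ v, v ∉ Hd → v ≠ r ∧ v ∉ bs r f ∧ v ∉ E := by
    intro v hv
    simp only [hHd, mem_insert, mem_union, not_or] at hv
    tauto
  have hsib : ∀ v, v ∉ Hd → ∀ w, w ≠ r → f w = f v → w = v := by
    intro v hv w hwr hw
    by_contra hwv
    exact (hr_notin v hv).2.1 (by simp [bs]; exact ⟨(hr_notin v hv).1, w, hwv, hwr, hw⟩)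
  -- a long segment
  have hseg : ∃ b, ∀ i < 48 * k, f^[i] b ∉ Hd := by
    by_contra hcon
    push Not at hcon
    have hex : ∀ v, ∃ n, f^[n] v ∈ Hd := fun v => by
      obtain ⟨i, _, hi⟩ := hcon v
      exact ⟨i, hi⟩
    have hinj : ∀ n v w, f^[n] v = f^[n] w → (∀ i < n, f^[i] v ∉ Hd) → (∀ i < n, f^[i] w ∉ Hd) →
        v = w := by
      intro n
      induction n with
      | zero => intro v w h _ _; exact h
      | succ n ih =>
        intro v w h hv hw
        have h1 : f v = f w := ih (f v) (f w) h (fun i hi => hv (i+1) (by omega))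
          (fun i hi => hw (i+1) (by omega))
        have hv0 : v ∉ Hd := hv 0 (by omega)
        have hw0 : w ∉ Hd := hw 0 (by omega)
        exact hsib w hw0 v (hr_notin v hv0).1 h1
    have hcard : (Finset.univ : Finset α).card ≤ (Hd ×ˢ Finset.range (48 * k)).card := by
      apply Finset.card_le_card_of_injOn
        (fun v => (f^[Nat.find (hex v)] v, Nat.find (hex v)))
      · intro v _
        obtain ⟨i, hi, hi'⟩ := hcon v
        have h1 := Nat.find_min' (hex v) hi'
        simp only [coe_product, Set.mem_prod, mem_coe, mem_range]
        exact ⟨Nat.find_spec (hex v), by omega⟩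
      · intro v _ w _ hvw
        simp only [Prod.mk.injEq] at hvw
        obtain ⟨h1, h2⟩ := hvw
        apply hinj (Nat.find (hex v)) v w
        · rw [h1, h2]
        · intro i hi; exact Nat.find_min (hex v) hi
        · intro i hi; exact Nat.find_min (hex w) (h2 ▸ hi)
    rw [card_univ, card_product, card_range] at hcard
    have : Hd.card * (48 * k) ≤ 3 * k * (48 * k) := Nat.mul_le_mul_right _ hHdc
    nlinarith
  obtain ⟨b, hb⟩ := hseg
  set a : ℕ → α := fun i => f^[i] b with ha
  have ha1 : ∀ i, f (a i) = a (i+1) := fun i => (Function.iterate_succ_apply' f i b).symm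
  have ha0 : a 0 = b := rfl
  have haIter : ∀ n i, f^[n] (a i) = a (n + i) := fun n i => (Function.iterate_add_apply f n i b).symm
  have hane : ∀ i < 48 * k, a i ≠ r := fun i hi => (hr_notin _ (hb i hi)).1
  have hainj : ∀ i j, i < j → j < 48 * k → a i ≠ a j := by
    intro i j hij hj h
    obtain ⟨t, rfl⟩ := Nat.exists_eq_add_of_lt hij
    have : f^[t+1] (a i) = a i := by rw [haIter, h]; congr 1; omega
    exact hane i (by omega) (hB.acyc this)
  -- in-arcs of the segment
  have hinarc : ∀ i < 48 * k, ∀ u, A u (a i) → u ≠ a (i+1) → ∃ n, f^[n] u = a i := by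
    intro i hi u hu hne
    by_contra hcon
    push Not at hcon
    have : a i ∈ Hs A r f u := by
      simp only [Hs, mem_filter, mem_univ, true_and]
      exact ⟨hu, hcon, (hr_notin _ (hb i hi)).2.1, by rw [ha1]; exact hne.symm⟩
    exact (hr_notin _ (hb i hi)).2.2 (hHE u this)
  -- descendants of the segment
  have hdesc : ∀ i < 48 * k, ∀ u, (∃ n, f^[n] u = a i) → (∃ n, f^[n] u = b) ∨
      ∃ j, 1 ≤ j ∧ j ≤ i ∧ u = a j := by
    intro i
    induction i with
    | zero => intro _ u h; exact Or.inl h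
    | succ i ih =>
      rintro hi u ⟨n, hn⟩
      rcases n with _ | n
      · exact Or.inr ⟨i+1, by omega, le_rfl, hn⟩
      · rw [Function.iterate_succ_apply', ← ha1] at hn
        have h1 : f^[n] u ≠ r := by
          intro h
          rw [h, hB.root, ha1] at hn
          exact hane _ hi hn.symm
        have h2 := hsib (a i) (hb i (by omega)) _ h1 hn
        rcases ih (by omega) u ⟨n, h2⟩ with h | ⟨j, hj1, hj2, hj3⟩
        · exact Or.inl h
        · exact Or.inr ⟨j, hj1, by omega, hj3⟩
  have hback : ∀ i, 1 ≤ i → i ≤ 48 * k - 1 → ∃ u q, A u (a i) ∧ (q = 0 ∨ q + 2 ≤ i) ∧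
      ((q = 0 ∧ ∃ n, f^[n] u = b) ∨ (1 ≤ q ∧ u = a q)) := by
    intro i h1 h2
    have hi : i < 48 * k := by omega
    have harc : A (a i) (a (i-1)) := by
      have := hB.arc (a (i-1)) (hane _ (by omega))
      rwa [ha1, Nat.sub_add_cancel h1] at this
    obtain ⟨u, hu, hux, huy⟩ := hdeg (a i) (a (i+1)) (a (i-1)) harc
    rcases hdesc i hi u (hinarc i hi u hu hux) with h | ⟨j, hj1, hj2, hj3⟩
    · exact ⟨u, 0, hu, Or.inl rfl, Or.inl ⟨rfl, h⟩⟩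
    · refine ⟨u, j, hu, Or.inr ?_, Or.inr ⟨hj1, hj3⟩⟩
      have hji : j ≠ i := by
        rintro rfl
        exact hirr _ (hj3 ▸ hu)
      have hji' : j ≠ i - 1 := by
        rintro rfl
        exact huy hj3
      omega
  have : Nonempty α := ⟨r⟩
  choose! u q huA hq huq using hback
  obtain ⟨L0, hL0, hL0c, hL0p⟩ := comb (48 * k - 1) q hq
  have hL0m : ∀ i ∈ L0, 1 ≤ i ∧ i ≤ 48 * k - 1 := fun i hi => Finset.mem_Icc.1 (hL0 hi)
  set L := L0.image a with hL
  have hainj' : ∀ i j, i < 48 * k → j < 48 * k → a i = a j → i = j := by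
    intro i j hi hj h
    rcases lt_trichotomy i j with h' | h' | h'
    · exact absurd h (hainj i j h' hj)
    · exact h'
    · exact absurd h.symm (hainj j i h' hi)
  have hLmem : ∀ i < 48 * k, a i ∈ L → i ∈ L0 := by
    intro i hi h
    obtain ⟨j, hj, hji⟩ := mem_image.1 h
    have := hL0m j hj
    rw [← hainj' j i (by omega) hi hji]
    exact hj
  have hLc : L.card = L0.card := by
    apply card_image_of_injOn
    intro i hi j hj h
    have := hL0m i hi
    have := hL0m j hj
    exact hainj' i j (by omega) (by omega) h
  have hbL : b ∉ L := by
    intro h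
    have := hL0m 0 (hLmem 0 (by omega) h)
    omega
  -- descendants of b
  have hbdesc : ∀ n v, f^[n] v = b → RA A L b v := by
    intro n
    induction n with
    | zero => intro v hv; rw [show v = b from hv]; exact ReflTransGen.refl
    | succ n ih =>
      intro v hv
      by_cases hvr : v = r
      · exfalso
        rw [hvr, iter_root hB.root] at hv
        exact hane 0 (by omega) hv.symm
      · refine ReflTransGen.tail (ih (f v) hv) ⟨hB.arc v hvr, fun hvL => ?_⟩
        obtain ⟨j, hj, rfl⟩ := mem_image.1 hvL
        have hjm := hL0m j hj
        rw [haIter, show n + 1 + j = n + j + 1 by omega] at hv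
        have hper : f^[n + j + 1] b = b := hv
        exact hane 0 (by omega) (hB.acyc hper)
  have hgood : ∀ i, (i = 0 → RA A L b (a i)) ∧ (1 ≤ i → i ≤ 48 * k - 1 →
      ∃ x, A x (a i) ∧ RA A L b x) := by
    intro i
    induction i using Nat.strong_induction_on with
    | _ i ih =>
    refine ⟨?_, ?_⟩
    · rintro rfl; exact ReflTransGen.refl
    -- using a back arc with good tail index
    have hreach : ∀ j, j < i → j ∉ L0 → j ≤ 48 * k - 1 → RA A L b (a j) := by
      intro j hj hjL hjk
      rcases Nat.eq_zero_or_pos j with h | h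
      · exact (ih j hj).1 h
      · obtain ⟨x, hx, hxr⟩ := (ih j hj).2 h hjk
        exact ReflTransGen.tail hxr ⟨hx, fun h => hjL (hLmem j (by omega) h)⟩
    have huse : ∀ j, 1 ≤ j → j ≤ 48 * k - 1 → q j < i → q j ∉ L0 → RA A L b (u j) := by
      intro j h1 h2 h3 h4
      rcases huq j h1 h2 with ⟨_, n, hn⟩ | ⟨h5, h6⟩
      · exact hbdesc n _ hn
      · rw [h6]
        have := hq j h1 h2
        exact hreach _ h3 h4 (by omega)
    intro h1 h2
    by_cases hqi : q i ∈ L0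
    · obtain ⟨p1, p2, p3⟩ := hL0p i h1 h2 hqi
      have hq1 := hq (i+1) (by omega) p1
      have := huse (i+1) (by omega) p1 (by omega) p3
      refine ⟨a (i+1), ?_, ReflTransGen.tail this ⟨huA (i+1) (by omega) p1, fun h =>
        p2 (hLmem _ (by omega) h)⟩⟩
      rw [← ha1]
      exact hB.arc _ (hane i (by omega))
    · have := hq i h1 h2
      exact ⟨u i, huA i h1 h2, huse i h1 h2 (by omega) hqi⟩
  obtain ⟨r', f', hB', hc'⟩ := third A r hB.reaches (hus r hB.reaches) b L hbL (by
    intro l hl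
    obtain ⟨i, hi, rfl⟩ := mem_image.1 hl
    exact (hgood i).2 (hL0m i hi).1 (hL0m i hi).2)
  have := hopt r' f' hB'
  omega

theorem mem_lv {r : α} {f : α → α} {v : α} : v ∈ lv r f ↔ ∀ w, w ≠ r → f w ≠ v := by
  simp [lv]

end OutBr

namespace DirGraph
open Relation OutBr
open scoped Classical

/-- adjacency on the vertex subtype -/
def adj {V : Type} (D : DirGraph V) (u v : {v // v ∈ D.verts}) : Prop := (u.1, v.1) ∈ D.arcs

theorem chain_RA {V : Type} (D T : DirGraph V) (hsub : T.arcs ⊆ D.arcs)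
    (S : Finset {v // v ∈ D.verts}) : ∀ (l : List V) (u v : {v // v ∈ D.verts}),
    (∀ x ∈ l, x ∈ D.verts) → l.IsChain (fun u v => (u, v) ∈ T.arcs) →
    l.head? = some u.1 → l.getLast? = some v.1 → (∀ x : {v // v ∈ D.verts}, x.1 ∈ l → x ∉ S) →
    RA D.adj S u v := by
  intro l
  induction l with
  | nil => intro u v _ _ h; simp at h
  | cons a l ih =>
    intro u v hm hc hh hl hS
    have hau : a = u.1 := by simpa using hh
    subst hau
    cases l with
    | nil =>
      have : u.1 = v.1 := by simpa using hl
      rw [Subtype.ext this]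
      exact ReflTransGen.refl
    | cons b l =>
      rw [List.isChain_cons_cons] at hc
      have hb : b ∈ D.verts := hm b (by simp)
      refine ReflTransGen.head (b := ⟨b, hb⟩) ⟨hsub hc.1, hS ⟨b, hb⟩ (by simp)⟩ ?_
      exact ih ⟨b, hb⟩ v (fun x hx => hm x (List.mem_cons_of_mem _ hx)) hc.2 (by simp)
        (by simpa using hl) (fun x hx => hS x (List.mem_cons_of_mem _ hx))

theorem branching_reach {V : Type} [Fintype V] {D T : DirGraph V} {r : V} (h : IsOutBranching T D r)
    (hr : r ∈ D.verts) (v : {v // v ∈ D.verts}) : ReflTransGen D.adj ⟨r, hr⟩ v := by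
  obtain ⟨⟨hT, hs⟩, hv⟩ := h
  obtain ⟨l, hl, hh, hla⟩ := hT.reach_root v.1 (by rw [hv]; exact v.2)
  have := chain_RA D T hs.2 ∅ l ⟨r, hr⟩ v (fun x hx => hs.1 (hl.2.2.1 x hx)) hl.2.2.2 hh hla
    (by simp)
  have hf : Fintype {v // v ∈ D.verts} := Fintype.ofFinite _
  exact RA.reach this

theorem branching_avoid {V : Type} [Fintype V] {D T : DirGraph V} {r : V}
    (h : IsOutBranching T D r) (hr : r ∈ D.verts) (u v : {v // v ∈ D.verts})
    (huv : (u.1, v.1) ∈ T.arcs) :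
    (⟨r, hr⟩ : {v // v ∈ D.verts}) ≠ v ∧ RA D.adj {v} ⟨r, hr⟩ u := by
  obtain ⟨⟨hT, hs⟩, hv⟩ := h
  have hrv : r ≠ v.1 := by
    rintro rfl
    have h0 := hT.root_indeg
    unfold inDeg at h0
    rw [Set.ncard_eq_zero (Set.toFinite _)] at h0
    have : ((u.1, v.1) : V × V) ∈ {a ∈ T.arcs | a.2 = v.1} := ⟨huv, rfl⟩
    rw [h0] at this
    exact this
  have huniq : ∀ w, (w, v.1) ∈ T.arcs → w = u.1 := by
    intro w hw
    have h1 := hT.indeg_one v.1 (hT.arcs_mem _ huv).2 hrv.symm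
    unfold inDeg at h1
    obtain ⟨x, hx⟩ := Set.ncard_eq_one.1 h1
    have a1 : ((u.1, v.1) : V × V) ∈ {a ∈ T.arcs | a.2 = v.1} := ⟨huv, rfl⟩
    have a2 : ((w, v.1) : V × V) ∈ {a ∈ T.arcs | a.2 = v.1} := ⟨hw, rfl⟩
    rw [hx] at a1 a2
    have := (Set.mem_singleton_iff.1 a2).trans (Set.mem_singleton_iff.1 a1).symm
    exact (Prod.mk.inj this).1
  refine ⟨fun h => hrv (congrArg Subtype.val h), ?_⟩
  obtain ⟨l, hl, hh, hla⟩ := hT.reach_root u.1 (by rw [hv]; exact u.2)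
  have hvl : v.1 ∉ l := by
    intro hvl
    obtain ⟨l1, l2, rfl⟩ := List.append_of_mem hvl
    rcases List.eq_nil_or_concat l1 with rfl | ⟨l1', w, rfl⟩
    · simp at hh
      exact hrv hh.symm
    · have hc : List.IsChain (fun u v => (u, v) ∈ T.arcs) _ := hl.2.2.2
      have hwv : (w, v.1) ∈ T.arcs := by
        rw [List.isChain_append] at hc
        exact hc.2.2 w (by simp) v.1 (by simp)
      have hwu := huniq w hwv
      have hu2 : u.1 ∈ v.1 :: l2 := by
        have : (v.1 :: l2).getLast? = some u.1 := by
          rw [List.getLast?_append_of_ne_nil _ (by simp)] at hla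
          exact hla
        exact List.mem_of_getLast? this
      have hnd := hl.2.1
      rw [List.nodup_append] at hnd
      exact hnd.2.2 w (by simp) u.1 hu2 hwu
  exact chain_RA D T hs.2 {v} l ⟨r, hr⟩ u (fun x hx => hs.1 (hl.2.2.1 x hx)) hl.2.2.2 hh hla
    (fun x hx hxv => hvl (by rw [Finset.mem_singleton.1 hxv] at hx; exact hx))

/-- the digraph of a parent map -/
def ofParent {V : Type} (D : DirGraph V) (r : {v // v ∈ D.verts})
    (f : {v // v ∈ D.verts} → {v // v ∈ D.verts}) : DirGraph V :=
  ⟨D.verts, {a | ∃ v : {v // v ∈ D.verts}, v ≠ r ∧ a = ((f v).1, v.1)}⟩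

theorem ofParent_branching {V : Type} [Fintype V] (D : DirGraph V) (r : {v // v ∈ D.verts})
    (f : {v // v ∈ D.verts} → {v // v ∈ D.verts}) (hB : Br D.adj r f) :
    IsOutBranching (ofParent D r f) D r.1 := by
  refine ⟨⟨⟨?_, r.2, ?_, ?_, ?_⟩, subset_rfl, ?_⟩, rfl⟩
  · rintro a ⟨v, _, rfl⟩
    exact ⟨(f v).2, v.2⟩
  · unfold inDeg
    rw [Set.ncard_eq_zero (Set.toFinite _)]
    rw [Set.eq_empty_iff_forall_notMem]
    rintro a ⟨⟨v, hv, rfl⟩, h⟩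
    exact hv (Subtype.ext h)
  · intro v hv hvr
    unfold inDeg
    rw [Set.ncard_eq_one]
    refine ⟨((f ⟨v, hv⟩).1, v), ?_⟩
    ext a
    constructor
    · rintro ⟨⟨w, hw, rfl⟩, h⟩
      have : w = ⟨v, hv⟩ := Subtype.ext h
      subst this
      rfl
    · intro h
      rw [Set.mem_singleton_iff.1 h]
      exact ⟨⟨⟨v, hv⟩, fun h => hvr (congrArg Subtype.val h), rfl⟩, rfl⟩
  · intro v hv
    have key : ∀ n (v : {v // v ∈ D.verts}), f^[n] v = r → ∃ l : List V,
        (ofParent D r f).IsDipath l ∧ l.head? = some r.1 ∧ l.getLast? = some v.1 ∧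
        ∀ x ∈ l, ∃ m, (f^[m] v).1 = x := by
      intro n
      induction n with
      | zero =>
        intro v hv
        have hv' : v = r := hv
        subst hv'
        refine ⟨[v.1], ⟨by simp, by simp, by simp [ofParent, v.2], ?_⟩, by simp, by simp, ?_⟩
        · exact List.isChain_singleton _
        · intro x hx
          exact ⟨0, (List.mem_singleton.1 hx).symm⟩
      | succ n ih =>
        intro v hv
        by_cases hvr : v = r
        · subst hvr
          refine ⟨[v.1], ⟨by simp, by simp, by simp [ofParent, v.2], ?_⟩, by simp, by simp, ?_⟩
          · exact List.isChain_singleton _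
          · intro x hx
            exact ⟨0, (List.mem_singleton.1 hx).symm⟩
        obtain ⟨l, ⟨h1, h2, h3, h4⟩, h5, h6, h7⟩ := ih (f v) hv
        have h4' : List.IsChain (fun u v => (u, v) ∈ (ofParent D r f).arcs) l := h4
        refine ⟨l ++ [v.1], ⟨by simp, ?_, ?_, ?_⟩, ?_, by simp, ?_⟩
        · rw [List.nodup_append]
          refine ⟨h2, by simp, ?_⟩
          intro x hx y hy hxy
          obtain ⟨m, hm⟩ := h7 x hx
          rw [hxy, List.mem_singleton.1 hy] at hm
          exact hvr (hB.acyc (n := m) (Subtype.ext hm))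
        · intro x hx
          rcases List.mem_append.1 hx with hx | hx
          · exact h3 x hx
          · rw [List.mem_singleton.1 hx]; exact v.2
        · show List.IsChain _ _
          rw [List.isChain_append]
          refine ⟨h4', List.isChain_singleton _, ?_⟩
          intro x hx y hy
          rw [h6] at hx
          simp at hx hy
          subst hx; subst hy
          exact ⟨v, hvr, rfl⟩
        · rw [List.head?_append, h5]; rfl
        · intro x hx
          rcases List.mem_append.1 hx with hx | hx
          · obtain ⟨m, hm⟩ := h7 x hx
            exact ⟨m + 1, hm⟩
          · exact ⟨0, (List.mem_singleton.1 hx).symm⟩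
    obtain ⟨n, hn⟩ := hB.reach ⟨v, hv⟩
    obtain ⟨l, h1, h2, h3, _⟩ := key n _ hn
    exact ⟨l, h1, h2, h3⟩
  · rintro a ⟨v, hv, rfl⟩
    exact hB.arc v hv

theorem le_ellS {V : Type} [Fintype V] (D : DirGraph V) [Fintype {v // v ∈ D.verts}]
    (r : {v // v ∈ D.verts})
    (f : {v // v ∈ D.verts} → {v // v ∈ D.verts}) (hB : Br D.adj r f) :
    (lv r f).card ≤ ellS D := by
  have h1 : (lv r f).card ≤ (leaves (ofParent D r f)).ncard := by
    have : ((lv r f).image Subtype.val).card = (lv r f).card :=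
      Finset.card_image_of_injective _ Subtype.val_injective
    rw [← this, ← Set.ncard_coe_finset]
    apply Set.ncard_le_ncard _ (Set.toFinite _)
    intro x hx
    obtain ⟨v, hv, rfl⟩ := Finset.mem_image.1 (Finset.mem_coe.1 hx)
    refine ⟨v.2, ?_⟩
    unfold outDeg
    rw [Set.ncard_eq_zero (Set.toFinite _), Set.eq_empty_iff_forall_notMem]
    rintro a ⟨⟨w, hw, rfl⟩, h⟩
    exact mem_lv.1 hv w hw (Subtype.ext h)
  refine h1.trans (le_csSup ?_ ⟨_, _, ofParent_branching D r f hB, rfl⟩)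
  refine ⟨Nat.card V, ?_⟩
  rintro k ⟨T, r, _, rfl⟩
  exact Set.ncard_le_card _

theorem exists_in {V : Type} [Fintype V] (D : DirGraph V) (v : V) (X : Finset V)
    (h : X.card < D.inDeg v) : ∃ u, (u, v) ∈ D.arcs ∧ u ∉ X := by
  by_contra hcon
  push Not at hcon
  have h1 : D.inDeg v ≤ ((X.image (fun u => (u, v)) : Finset (V × V)) : Set (V × V)).ncard := by
    apply Set.ncard_le_ncard _ (Set.toFinite _)
    rintro ⟨u, w⟩ ⟨ha, hw⟩
    have hw' : w = v := hw
    subst hw'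
    exact Finset.mem_coe.2 (Finset.mem_image.2 ⟨u, hcon u ha, rfl⟩)
  rw [Set.ncard_coe_finset] at h1
  have := Finset.card_image_le (s := X) (f := fun u => (u, v))
  omega

end DirGraph

namespace DirGraph

theorem ellS_ge_twelfth_sqrt_of_no_useless {V : Type} [Fintype V]
    (D : DirGraph V) (n : ℕ) (hD : D.WellFormed) (hn : D.verts.ncard = n)
    (hbr : ∃ (T : DirGraph V) (r : V), IsOutBranching T D r)
    (hu : ∀ a ∈ D.arcs, ¬ Useless D a)
    (hdeg : (∀ v ∈ D.verts, 3 ≤ D.inDeg v) ∨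
      ((∀ u v : V, (u, v) ∈ D.arcs → (v, u) ∉ D.arcs) ∧
        ∀ v ∈ D.verts, 2 ≤ D.inDeg v)) :
    (1 / 12 : ℝ) * Real.sqrt n ≤ (ellS D : ℝ) := by
  classical
  have hfin : Fintype {v // v ∈ D.verts} := Fintype.ofFinite _
  obtain ⟨T0, r0, hT0⟩ := hbr
  have hr0 : r0 ∈ D.verts := hT0.2 ▸ hT0.1.1.root_mem
  obtain ⟨r, f, hB, hc⟩ := OutBr.core D.adj
    (fun v h => (hD _ h).2.2 rfl) ⟨r0, hr0⟩ (branching_reach hT0 hr0)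
    (by
      intro r hr u v huv
      have hnu := hu _ huv
      unfold Useless at hnu
      push Not at hnu
      obtain ⟨T, r', hT, hmem⟩ := hnu
      have hr' : r' ∈ D.verts := hT.2 ▸ hT.1.1.root_mem
      obtain ⟨h1, h2⟩ := branching_avoid hT hr' u v hmem
      by_cases hvr : Relation.ReflTransGen D.adj v r
      · exact Or.inl hvr
      right
      refine ⟨fun h => hvr (h ▸ Relation.ReflTransGen.refl), ?_⟩
      have h3 : ∀ w, Relation.ReflTransGen D.adj r w → Relation.ReflTransGen D.adj w r →
          OutBr.RA D.adj {v} r w := by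
        intro w hw
        induction hw with
        | refl => intro _; exact Relation.ReflTransGen.refl
        | @tail b c _ hbc ih =>
          intro hcr
          refine Relation.ReflTransGen.tail (ih (Relation.ReflTransGen.head hbc hcr)) ⟨hbc, ?_⟩
          intro hcv
          exact hvr (Finset.mem_singleton.1 hcv ▸ hcr)
      exact Relation.ReflTransGen.trans
        (h3 _ (hr _) (branching_reach hT hr' r)) h2)
    (by
      intro v x y hvy
      rcases hdeg with h | ⟨ho, h⟩
      · have h3 := h v.1 v.2
        have h2 : ({x.1, y.1} : Finset V).card ≤ 2 := Finset.card_le_two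
        obtain ⟨u, hu1, hu2⟩ := exists_in D v.1 {x.1, y.1} (by omega)
        refine ⟨⟨u, (hD _ hu1).1⟩, hu1, ?_, ?_⟩
        · rintro rfl; simp at hu2
        · rintro rfl; simp at hu2
      · have h3 := h v.1 v.2
        obtain ⟨u, hu1, hu2⟩ := exists_in D v.1 {x.1} (by simp; omega)
        refine ⟨⟨u, (hD _ hu1).1⟩, hu1, ?_, ?_⟩
        · rintro rfl; simp at hu2
        · rintro rfl; exact ho _ _ hvy hu1)
  have hle := le_ellS D r f hB
  have hcard : Fintype.card {v // v ∈ D.verts} = n := by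
    rw [← hn, ← Nat.card_eq_fintype_card]
    rfl
  rw [hcard] at hc
  have hc2 : n ≤ 144 * (ellS D) ^ 2 := hc.trans (Nat.mul_le_mul_left _ (Nat.pow_le_pow_left hle 2))
  have hc3 : (n : ℝ) ≤ (12 * (ellS D : ℝ)) ^ 2 := by
    have : (n : ℝ) ≤ 144 * (ellS D : ℝ) ^ 2 := by exact_mod_cast hc2
    nlinarith
  have hs : Real.sqrt n ≤ 12 * (ellS D : ℝ) := Real.sqrt_le_iff.2 ⟨by positivity, hc3⟩
  linarith

end DirGraph
end

section
/- For every integer k ≥ 1 there exists a digraph D that has at least one out-branching, contains no useless arcs, and satisfies ℓ(D) ≥ 5k and ℓ_s(D) = 2k (so ℓ(D)/ℓ_s(D) ≥ 2.5). -/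
namespace DirGraph

/-- The arc relation of the construction on `{0, …, 7k}`. -/
def RArc (k u v : ℕ) : Prop :=
  (u % 7 = 0 ∧ u < 7 * k ∧ v = u + 1) ∨ (u % 7 = 0 ∧ u < 7 * k ∧ v = u + 2) ∨
  (u % 7 = 1 ∧ v = u + 2) ∨ (u % 7 = 2 ∧ v = u + 4) ∨ (u % 7 = 3 ∧ v = u + 2) ∨
  (u % 7 = 4 ∧ v = u + 1) ∨ (u % 7 = 4 ∧ v = u + 2) ∨ (u % 7 = 5 ∧ v = u + 2) ∨
  (u % 7 = 6 ∧ u = v + 2) ∨ (u = 7 * k ∧ 1 ≤ v % 7 ∧ v % 7 ≤ 4)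

/-- The digraph of the construction. -/
def RD (k : ℕ) : DirGraph (Fin (7 * k + 1)) :=
  ⟨Set.univ, {a | RArc k a.1.val a.2.val}⟩

/-- The digraph given by a parent function. -/
def parTree {V : Type} (S : Set V) (r : V) (p : V → V) : DirGraph V :=
  ⟨S, {a | a.2 ∈ S ∧ a.2 ≠ r ∧ a.1 = p a.2}⟩

theorem parTree_isOutTree {V : Type} (S : Set V) (r : V) (p : V → V) (d : V → ℕ) (hr : r ∈ S)
    (hp : ∀ v ∈ S, v ≠ r → p v ∈ S ∧ d (p v) < d v) : (parTree S r p).IsOutTree r where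
  arcs_mem := by
    rintro ⟨u, v⟩ ⟨h1, h2, h3⟩
    simp only at h1 h2 h3
    subst h3
    exact ⟨(hp v h1 h2).1, h1⟩
  root_mem := hr
  root_indeg := by
    have : {a ∈ (parTree S r p).arcs | a.2 = r} = ∅ := by
      ext ⟨u, v⟩
      simp only [parTree, Set.mem_setOf_eq, Set.mem_empty_iff_false, iff_false]
      tauto
    unfold inDeg
    rw [this, Set.ncard_empty]
  indeg_one := by
    intro v hv hvr
    have : {a ∈ (parTree S r p).arcs | a.2 = v} = {(p v, v)} := by
      ext ⟨u, x⟩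
      simp only [parTree, Set.mem_setOf_eq, Set.mem_singleton_iff, Prod.mk.injEq]
      constructor
      · rintro ⟨⟨_, _, h⟩, rfl⟩
        exact ⟨h, rfl⟩
      · rintro ⟨rfl, rfl⟩
        exact ⟨⟨hv, hvr, rfl⟩, rfl⟩
    unfold inDeg
    rw [this, Set.ncard_singleton]
  reach_root := by
    have key : ∀ n : ℕ, ∀ v ∈ S, d v = n → ∃ l : List V, (parTree S r p).IsDipath l ∧
        l.head? = some r ∧ l.getLast? = some v ∧ ∀ x ∈ l, d x ≤ n := by
      intro n
      induction n using Nat.strong_induction_on with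
      | _ n ih =>
        intro v hv hn
        by_cases hvr : v = r
        · subst hvr
          refine ⟨[v], ⟨by simp, by simp, by simpa [parTree] using hv, ?_⟩, by simp, by simp, ?_⟩
          · exact List.isChain_singleton _
          · simp [hn]
        · obtain ⟨h1, h2⟩ := hp v hv hvr
          obtain ⟨l, ⟨ha, hb, hc, he⟩, hh, hl, hd⟩ := ih (d (p v)) (hn ▸ h2) (p v) h1 rfl
          refine ⟨l ++ [v], ⟨by simp, ?_, ?_, ?_⟩, ?_, by simp, ?_⟩
          · rw [List.nodup_append]
            refine ⟨hb, by simp, ?_⟩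
            intro a hal b hbl hab
            simp only [List.mem_singleton] at hbl
            subst hbl
            subst hab
            have := hd a hal
            omega
          · intro x hx
            rw [List.mem_append, List.mem_singleton] at hx
            rcases hx with hx | rfl
            · exact hc x hx
            · exact hv
          · refine List.isChain_append.2 ⟨he, List.isChain_singleton _, ?_⟩
            intro x hx y hy
            rw [hl] at hx
            simp at hx hy
            subst hx
            subst hy
            exact ⟨hv, hvr, rfl⟩
          · rw [List.head?_append, hh]
            rfl
          · intro x hx
            rw [List.mem_append, List.mem_singleton] at hx
            rcases hx with hx | rfl
            · have := hd x hx
              omega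
            · omega
    intro v hv
    obtain ⟨l, h1, h2, h3, _⟩ := key _ v hv rfl
    exact ⟨l, h1, h2, h3⟩

theorem not_leaf_of_arc {V : Type} [Finite V] {T : DirGraph V} {u v : V} (h : (u, v) ∈ T.arcs) :
    u ∉ T.leaves := by
  rintro ⟨_, h0⟩
  unfold outDeg at h0
  rw [Set.ncard_eq_zero (Set.toFinite _)] at h0
  have : (u, v) ∈ {a ∈ T.arcs | a.1 = u} := ⟨h, rfl⟩
  rw [h0] at this
  exact this

theorem leaf_of_no_arc {V : Type} {T : DirGraph V} {u : V} (hu : u ∈ T.verts)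
    (h : ∀ v, (u, v) ∉ T.arcs) : u ∈ T.leaves := by
  refine ⟨hu, ?_⟩
  have : {a ∈ T.arcs | a.1 = u} = ∅ := by
    ext ⟨a, b⟩
    simp only [Set.mem_setOf_eq, Set.mem_empty_iff_false, iff_false]
    rintro ⟨h1, rfl⟩
    exact h _ h1
  unfold outDeg
  rw [this, Set.ncard_empty]

theorem exists_depth {V : Type} {T : DirGraph V} {r : V} (hT : T.IsOutTree r)
    [Finite V] : ∃ d : V → ℕ, ∀ u v, (u, v) ∈ T.arcs → d u < d v := by
  classical
  have hex : ∀ v, v ∈ T.verts → ∃ n, ∃ l : List V, l.length = n ∧ T.IsDipath l ∧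
      l.head? = some r ∧ l.getLast? = some v := by
    intro v hv
    obtain ⟨l, h⟩ := hT.reach_root v hv
    exact ⟨_, l, rfl, h⟩
  refine ⟨fun v => if h : v ∈ T.verts then Nat.find (hex v h) else 0, ?_⟩
  intro u v huv
  obtain ⟨hu, hv⟩ := hT.arcs_mem _ huv
  simp only at hu hv
  simp only [hu, hv, dif_pos]
  obtain ⟨l, hlen, ⟨ha, hb, hc, he⟩, hh, hl⟩ := Nat.find_spec (hex v hv)
  have hvr : v ≠ r := by
    rintro rfl
    have h0 := hT.root_indeg
    unfold inDeg at h0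
    rw [Set.ncard_eq_zero (Set.toFinite _)] at h0
    have : (u, v) ∈ {a ∈ T.arcs | a.2 = v} := ⟨huv, rfl⟩
    rw [h0] at this
    exact this
  rw [← hlen]
  -- split off the last vertex
  obtain ⟨l', x, rfl⟩ : ∃ l' x, l = l' ++ [x] := ⟨l.dropLast, l.getLast ha, (List.dropLast_append_getLast ha).symm⟩
  simp at hl
  subst hl
  have hne : l' ≠ [] := by
    rintro rfl
    simp at hh
    exact hvr hh
  obtain ⟨l'', y, rfl⟩ : ∃ l'' y, l' = l'' ++ [y] := 
    ⟨l'.dropLast, l'.getLast hne, (List.dropLast_append_getLast hne).symm⟩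
  have he' := List.isChain_append.1 he
  have hyx : (y, x) ∈ T.arcs := he'.2.2 y (by simp) x (by simp)
  have hyu : y = u := by
    have h1 := hT.indeg_one x hv hvr
    unfold inDeg at h1
    rw [Set.ncard_eq_one] at h1
    obtain ⟨a, hA⟩ := h1
    have e1 : (u, x) ∈ {a ∈ T.arcs | a.2 = x} := ⟨huv, rfl⟩
    have e2 : (y, x) ∈ {a ∈ T.arcs | a.2 = x} := ⟨hyx, rfl⟩
    rw [hA, Set.mem_singleton_iff] at e1 e2
    have := e2.trans e1.symm
    exact (Prod.mk.inj this).1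
  subst hyu
  refine lt_of_le_of_lt (Nat.find_le ⟨l'' ++ [y], rfl, ⟨hne, ?_, ?_, he'.1⟩, ?_, by simp⟩) ?_
  · exact (List.nodup_append.1 hb).1
  · intro z hz
    exact hc z (List.mem_append_left _ hz)
  · rw [List.head?_append_of_ne_nil _ hne] at hh
    exact hh
  · simp

theorem rarc_inv (k i x : ℕ) (hi : i < k) :
    (RArc k x (7 * i + 1) → x = 7 * i ∨ x = 7 * k) ∧
    (RArc k x (7 * i + 2) → x = 7 * i ∨ x = 7 * k) ∧
    (RArc k x (7 * i + 3) → x = 7 * i + 1 ∨ x = 7 * k) ∧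
    (RArc k x (7 * i + 4) → x = 7 * i + 6 ∨ x = 7 * k) ∧
    (RArc k x (7 * i + 5) → x = 7 * i + 3 ∨ x = 7 * i + 4) ∧
    (RArc k x (7 * i + 6) → x = 7 * i + 2 ∨ x = 7 * i + 4) ∧
    (RArc k x (7 * i + 7) → x = 7 * i + 5) := by
  unfold RArc
  refine ⟨?_, ?_, ?_, ?_, ?_, ?_, ?_⟩ <;> intro h <;>
    rcases h with h | h | h | h | h | h | h | h | h | h <;> omega

theorem gadget_step (k : ℕ) (q d : ℕ → ℕ) (hq : ∀ v, 0 < v → v ≤ 7 * k → RArc k (q v) v)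
    (hd : ∀ v, 0 < v → v ≤ 7 * k → d (q v) < d v) (i : ℕ) (hi : i < k)
    (hw : d (7 * i + 7) ≤ d (7 * k)) :
    d (7 * i) < d (7 * k) ∧
    q (7 * i + 7) = 7 * i + 5 ∧
    ((q (7 * i + 5) = 7 * i + 3 ∧ q (7 * i + 3) = 7 * i + 1 ∧ q (7 * i + 1) = 7 * i) ∨
     (q (7 * i + 5) = 7 * i + 4 ∧ q (7 * i + 4) = 7 * i + 6 ∧ q (7 * i + 6) = 7 * i + 2 ∧
      q (7 * i + 2) = 7 * i)) := by
  have a1 := hq (7 * i + 1) (by omega) (by omega)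
  have a2 := hq (7 * i + 2) (by omega) (by omega)
  have a3 := hq (7 * i + 3) (by omega) (by omega)
  have a4 := hq (7 * i + 4) (by omega) (by omega)
  have a5 := hq (7 * i + 5) (by omega) (by omega)
  have a6 := hq (7 * i + 6) (by omega) (by omega)
  have a7 := hq (7 * i + 7) (by omega) (by omega)
  have d1 := hd (7 * i + 1) (by omega) (by omega)
  have d2 := hd (7 * i + 2) (by omega) (by omega)
  have d3 := hd (7 * i + 3) (by omega) (by omega)
  have d4 := hd (7 * i + 4) (by omega) (by omega)
  have d5 := hd (7 * i + 5) (by omega) (by omega)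
  have d6 := hd (7 * i + 6) (by omega) (by omega)
  have d7 := hd (7 * i + 7) (by omega) (by omega)
  have b1 : q (7 * i + 1) = 7 * i ∨ q (7 * i + 1) = 7 * k :=
    (rarc_inv k i _ hi).1 a1
  have b2 : q (7 * i + 2) = 7 * i ∨ q (7 * i + 2) = 7 * k :=
    (rarc_inv k i _ hi).2.1 a2
  have b3 : q (7 * i + 3) = 7 * i + 1 ∨ q (7 * i + 3) = 7 * k :=
    (rarc_inv k i _ hi).2.2.1 a3
  have b4 : q (7 * i + 4) = 7 * i + 6 ∨ q (7 * i + 4) = 7 * k :=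
    (rarc_inv k i _ hi).2.2.2.1 a4
  have b5 : q (7 * i + 5) = 7 * i + 3 ∨ q (7 * i + 5) = 7 * i + 4 :=
    (rarc_inv k i _ hi).2.2.2.2.1 a5
  have b6 : q (7 * i + 6) = 7 * i + 2 ∨ q (7 * i + 6) = 7 * i + 4 :=
    (rarc_inv k i _ hi).2.2.2.2.2.1 a6
  have b7 : q (7 * i + 7) = 7 * i + 5 :=
    (rarc_inv k i _ hi).2.2.2.2.2.2 a7
  rw [b7] at d7
  rcases b5 with b5 | b5 <;> rw [b5] at d5
  · rcases b3 with b3 | b3 <;> rw [b3] at d3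
    · rcases b1 with b1 | b1 <;> rw [b1] at d1
      · exact ⟨by omega, b7, Or.inl ⟨b5, b3, b1⟩⟩
      · omega
    · omega
  · rcases b4 with b4 | b4 <;> rw [b4] at d4
    · rcases b6 with b6 | b6 <;> rw [b6] at d6
      · rcases b2 with b2 | b2 <;> rw [b2] at d2
        · exact ⟨by omega, b7, Or.inr ⟨b5, b4, b6, b2⟩⟩
        · omega
      · omega
    · omega

theorem gadget_depth (k : ℕ) (q d : ℕ → ℕ) (hq : ∀ v, 0 < v → v ≤ 7 * k → RArc k (q v) v)
    (hd : ∀ v, 0 < v → v ≤ 7 * k → d (q v) < d v) (j : ℕ) :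
    ∀ i, i + j + 1 = k → d (7 * i + 7) ≤ d (7 * k) := by
  induction j with
  | zero =>
    intro i hi
    have : 7 * i + 7 = 7 * k := by omega
    rw [this]
  | succ j ih =>
    intro i hi
    have := (gadget_step k q d hq hd (i + 1) (by omega) (ih (i + 1) (by omega))).1
    have e : 7 * (i + 1) = 7 * i + 7 := by omega
    rw [e] at this
    exact this.le

theorem gadget_leaves (k : ℕ) (q d : ℕ → ℕ) (hq : ∀ v, 0 < v → v ≤ 7 * k → RArc k (q v) v)
    (hd : ∀ v, 0 < v → v ≤ 7 * k → d (q v) < d v) (i : ℕ) (hi : i < k) :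
    ∃ a b, ∀ v, 7 * i + 1 ≤ v → v ≤ 7 * i + 7 → v ≠ a → v ≠ b →
      ∃ x, 0 < x ∧ x ≤ 7 * k ∧ q x = v := by
  have hs := gadget_step k q d hq hd i hi (gadget_depth k q d hq hd (k - i - 1) i (by omega))
  have a1 := hq (7 * i + 1) (by omega) (by omega)
  have a2 := hq (7 * i + 2) (by omega) (by omega)
  have a3 := hq (7 * i + 3) (by omega) (by omega)
  have a4 := hq (7 * i + 4) (by omega) (by omega)
  have a6 := hq (7 * i + 6) (by omega) (by omega)
  have d4 := hd (7 * i + 4) (by omega) (by omega)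
  have d6 := hd (7 * i + 6) (by omega) (by omega)
  have b1 : q (7 * i + 1) = 7 * i ∨ q (7 * i + 1) = 7 * k :=
    (rarc_inv k i _ hi).1 a1
  have b2 : q (7 * i + 2) = 7 * i ∨ q (7 * i + 2) = 7 * k :=
    (rarc_inv k i _ hi).2.1 a2
  have b3 : q (7 * i + 3) = 7 * i + 1 ∨ q (7 * i + 3) = 7 * k :=
    (rarc_inv k i _ hi).2.2.1 a3
  have b4 : q (7 * i + 4) = 7 * i + 6 ∨ q (7 * i + 4) = 7 * k :=
    (rarc_inv k i _ hi).2.2.2.1 a4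
  have b6 : q (7 * i + 6) = 7 * i + 2 ∨ q (7 * i + 6) = 7 * i + 4 :=
    (rarc_inv k i _ hi).2.2.2.2.2.1 a6
  -- internal vertices
  have I : ∀ x v, 0 < x → x ≤ 7 * k → q x = v → ∃ x, 0 < x ∧ x ≤ 7 * k ∧ q x = v :=
    fun x v h1 h2 h3 => ⟨x, h1, h2, h3⟩
  have i5 := I _ _ (by omega) (by omega) hs.2.1
  by_cases hw : ∃ x, 0 < x ∧ x ≤ 7 * k ∧ q x = 7 * k
  · have i7 : ∃ x, 0 < x ∧ x ≤ 7 * k ∧ q x = 7 * i + 7 := by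
      by_cases hk : i + 1 = k
      · have : 7 * i + 7 = 7 * k := by omega
        rw [this]
        exact hw
      · have hs' := gadget_step k q d hq hd (i + 1) (by omega)
          (gadget_depth k q d hq hd (k - i - 2) (i + 1) (by omega))
        rcases hs'.2.2 with h | h
        · exact I _ _ (by omega) (by omega) h.2.2
        · exact I _ _ (by omega) (by omega) h.2.2.2
    rcases hs.2.2 with ⟨h5, h3, h1⟩ | ⟨h5, h4, h6, h2⟩
    · have i3 := I _ _ (by omega) (by omega) h5
      have i1 := I _ _ (by omega) (by omega) h3
      rcases b6 with b6 | b6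
      · have i2 := I _ _ (by omega) (by omega) b6
        refine ⟨7 * i + 4, 7 * i + 6, fun v h1 h2 h3 h4 => ?_⟩
        have : v = 7 * i + 1 ∨ v = 7 * i + 2 ∨ v = 7 * i + 3 ∨ v = 7 * i + 5 ∨ v = 7 * i + 7 := by
          omega
        rcases this with rfl | rfl | rfl | rfl | rfl <;> assumption
      · have i4 := I _ _ (by omega) (by omega) b6
        refine ⟨7 * i + 2, 7 * i + 6, fun v h1 h2 h3 h4 => ?_⟩
        have : v = 7 * i + 1 ∨ v = 7 * i + 4 ∨ v = 7 * i + 3 ∨ v = 7 * i + 5 ∨ v = 7 * i + 7 := by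
          omega
        rcases this with rfl | rfl | rfl | rfl | rfl <;> assumption
    · have i4 := I _ _ (by omega) (by omega) h5
      have i6 := I _ _ (by omega) (by omega) h4
      have i2 := I _ _ (by omega) (by omega) h6
      refine ⟨7 * i + 1, 7 * i + 3, fun v h1 h2 h3 h4 => ?_⟩
      have : v = 7 * i + 6 ∨ v = 7 * i + 4 ∨ v = 7 * i + 2 ∨ v = 7 * i + 5 ∨ v = 7 * i + 7 := by
        omega
      rcases this with rfl | rfl | rfl | rfl | rfl <;> assumption
  · have N : ∀ x, 0 < x → x ≤ 7 * k → q x ≠ 7 * k := fun x h1 h2 h3 => hw ⟨x, h1, h2, h3⟩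
    have c3 := b3.resolve_right (N _ (by omega) (by omega))
    have c4 := b4.resolve_right (N _ (by omega) (by omega))
    have c6 : q (7 * i + 6) = 7 * i + 2 := by
      rcases b6 with b6 | b6
      · exact b6
      · rw [b6] at d6
        rw [c4] at d4
        omega
    have i1 := I _ _ (by omega) (by omega) c3
    have i6 := I _ _ (by omega) (by omega) c4
    have i2 := I _ _ (by omega) (by omega) c6
    rcases hs.2.2 with ⟨h5, -⟩ | ⟨h5, -⟩
    · have i3 := I _ _ (by omega) (by omega) h5
      refine ⟨7 * i + 4, 7 * i + 7, fun v h1 h2 h3 h4 => ?_⟩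
      have : v = 7 * i + 6 ∨ v = 7 * i + 1 ∨ v = 7 * i + 2 ∨ v = 7 * i + 5 ∨ v = 7 * i + 3 := by
        omega
      rcases this with rfl | rfl | rfl | rfl | rfl <;> assumption
    · have i4 := I _ _ (by omega) (by omega) h5
      refine ⟨7 * i + 3, 7 * i + 7, fun v h1 h2 h3 h4 => ?_⟩
      have : v = 7 * i + 6 ∨ v = 7 * i + 1 ∨ v = 7 * i + 2 ∨ v = 7 * i + 5 ∨ v = 7 * i + 4 := by
        omega
      rcases this with rfl | rfl | rfl | rfl | rfl <;> assumption

theorem exists_inArc {V : Type} {T : DirGraph V} {r v : V} (hT : T.IsOutTree r) (hv : v ∈ T.verts)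
    (hvr : v ≠ r) : ∃ u, (u, v) ∈ T.arcs := by
  have h1 := hT.indeg_one v hv hvr
  unfold inDeg at h1
  rw [Set.ncard_eq_one] at h1
  obtain ⟨⟨u, x⟩, hA⟩ := h1
  have : (u, x) ∈ {a ∈ T.arcs | a.2 = v} := by rw [hA]; rfl
  obtain ⟨h, rfl⟩ := this
  exact ⟨u, h⟩

theorem branching_leaves_le (k : ℕ) (hk : 1 ≤ k) (T : DirGraph (Fin (7 * k + 1)))
    (r : Fin (7 * k + 1)) (h : IsOutBranching T (RD k) r) : T.leaves.ncard ≤ 2 * k := by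
  classical
  obtain ⟨⟨hT, hsub⟩, hverts⟩ := h
  have hall : ∀ v, v ∈ T.verts := fun v => by rw [hverts]; exact Set.mem_univ v
  have hr : r.val = 0 := by
    by_contra hne
    obtain ⟨u, hu⟩ := exists_inArc hT (hall ⟨0, by omega⟩) (fun h => hne (by rw [← h]))
    have := hsub.2 hu
    simp only [RD, RArc, Set.mem_setOf_eq] at this
    omega
  obtain ⟨d, hd⟩ := exists_depth hT
  have hin : ∀ v : Fin (7 * k + 1), 0 < v.val → ∃ u, (u, v) ∈ T.arcs := fun v hv =>
    exists_inArc hT (hall v) (fun h => by rw [h] at hv; omega)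
  have hin' : ∀ v : Fin (7 * k + 1), ∃ u, 0 < v.val → (u, v) ∈ T.arcs := fun v => by
    by_cases hv : 0 < v.val
    · obtain ⟨u, hu⟩ := hin v hv
      exact ⟨u, fun _ => hu⟩
    · exact ⟨v, fun h => absurd h hv⟩
  choose p hp using hin'
  let q : ℕ → ℕ := fun v => if hv : v < 7 * k + 1 then (p ⟨v, hv⟩).val else 0
  let d' : ℕ → ℕ := fun v => if hv : v < 7 * k + 1 then d ⟨v, hv⟩ else 0
  have hq1 : ∀ v, 0 < v → v ≤ 7 * k → RArc k (q v) v := by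
    intro v h0 h1
    have hv : v < 7 * k + 1 := by omega
    have := hsub.2 (hp ⟨v, hv⟩ h0)
    simp only [q, dif_pos hv]
    exact this
  have hd1 : ∀ v, 0 < v → v ≤ 7 * k → d' (q v) < d' v := by
    intro v h0 h1
    have hv : v < 7 * k + 1 := by omega
    have := hd _ _ (hp ⟨v, hv⟩ h0)
    simp only [q, d', dif_pos hv, Fin.is_lt, dif_pos]
    exact this
  have hnl : ∀ x, 0 < x → x ≤ 7 * k → ∀ v : Fin (7 * k + 1), q x = v.val → v ∉ T.leaves := by
    intro x h0 h1 v hqv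
    have hx : x < 7 * k + 1 := by omega
    simp only [q, dif_pos hx] at hqv
    have := not_leaf_of_arc (hp ⟨x, hx⟩ h0)
    rwa [Fin.ext hqv] at this
  rw [Set.ncard_eq_toFinset_card']
  have hpos : ∀ v ∈ T.leaves, 0 < v.val := by
    intro v hv
    by_contra hv0
    have hs := gadget_step k q d' hq1 hd1 0 (by omega)
      (gadget_depth k q d' hq1 hd1 (k - 1) 0 (by omega))
    rcases hs.2.2 with h | h
    · exact hnl (7 * 0 + 1) (by omega) (by omega) v (by rw [h.2.2]; omega) hv
    · exact hnl (7 * 0 + 2) (by omega) (by omega) v (by rw [h.2.2.2]; omega) hv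
  have hcard := Finset.card_le_mul_card_image_of_maps_to (s := T.leaves.toFinset)
    (t := Finset.range k) (f := fun v => (v.val - 1) / 7) (n := 2) ?_ ?_
  · simpa using hcard
  · intro v hv
    have := hpos v (by simpa using hv)
    have := v.is_lt
    simp only [Finset.mem_range]
    omega
  · intro i hi
    rw [Finset.mem_range] at hi
    obtain ⟨a, b, hab⟩ := gadget_leaves k q d' hq1 hd1 i hi
    rw [← Finset.card_image_of_injective _ (Fin.val_injective (n := 7 * k + 1))]
    refine le_trans (Finset.card_le_card (t := {a, b}) ?_) Finset.card_le_two
    intro v hv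
    simp only [Finset.mem_image, Finset.mem_filter, Set.mem_toFinset] at hv
    obtain ⟨v, ⟨hv, hvi⟩, rfl⟩ := hv
    have := hpos v hv
    by_contra hne
    simp only [Finset.mem_insert, Finset.mem_singleton, not_or] at hne
    obtain ⟨x, hx0, hx1, hx2⟩ := hab v.val (by omega) (by omega) hne.1 hne.2
    exact hnl x hx0 hx1 v hx2 hv

/-- Spanning parent trees of the construction. -/
theorem branching_of (k : ℕ) (p : Fin (7 * k + 1) → Fin (7 * k + 1)) (d : ℕ → ℕ)
    (h : ∀ v, 0 < v.val → RArc k (p v).val v.val ∧ d (p v).val < d v.val) :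
    IsOutBranching (parTree Set.univ 0 p) (RD k) 0 := by
  have h0 : ∀ v : Fin (7 * k + 1), v ≠ 0 → 0 < v.val := fun v hv =>
    Nat.pos_of_ne_zero (fun e => hv (Fin.ext e))
  refine ⟨⟨parTree_isOutTree _ _ _ (fun v => d v.val) (Set.mem_univ _) ?_, subset_rfl, ?_⟩, rfl⟩
  · intro v _ hv
    exact ⟨Set.mem_univ _, (h v (h0 v hv)).2⟩
  · rintro ⟨u, v⟩ ⟨_, h2, h3⟩
    simp only at h2 h3
    subst h3
    exact (h v (h0 v h2)).1

/-- Turn a function on naturals into a function on `Fin`. -/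
def toF (k : ℕ) (f : ℕ → ℕ) (v : Fin (7 * k + 1)) : Fin (7 * k + 1) :=
  if h : f v.val < 7 * k + 1 then ⟨f v.val, h⟩ else 0

theorem toF_val (k : ℕ) (f : ℕ → ℕ) (v : Fin (7 * k + 1)) (h : f v.val < 7 * k + 1) :
    (toF k f v).val = f v.val := by
  unfold toF
  rw [dif_pos h]

theorem branching_of_nat (k : ℕ) (p d : ℕ → ℕ)
    (h : ∀ v, 0 < v → v < 7 * k + 1 → p v < 7 * k + 1 ∧ RArc k (p v) v ∧ d (p v) < d v) :
    IsOutBranching (parTree Set.univ 0 (toF k p)) (RD k) 0 := by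
  refine branching_of k _ d ?_
  intro v hv
  obtain ⟨h1, h2, h3⟩ := h v.val hv v.is_lt
  rw [toF_val k p v h1]
  exact ⟨h2, h3⟩

/-- First parent pattern. -/
def pA (k v : ℕ) : ℕ :=
  if v % 7 = 0 then v - 2 else if v % 7 = 1 then v - 1 else if v % 7 = 2 then 7 * k
  else if v % 7 = 3 then v - 2 else if v % 7 = 4 then v + 2 else if v % 7 = 5 then v - 2
  else v - 4

/-- Rank for the first pattern. -/
def dA (k v : ℕ) : ℕ :=
  if v % 7 = 2 then 7 * k + 1 else if v % 7 = 6 then 7 * k + 2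
  else if v % 7 = 4 then 7 * k + 3 else v

/-- Second parent pattern. -/
def pB (k v : ℕ) : ℕ :=
  if v % 7 = 0 then v - 2 else if v % 7 = 1 then v - 1 else if v % 7 = 2 then v - 2
  else if v % 7 = 3 then v - 2 else if v % 7 = 4 then 7 * k else if v % 7 = 5 then v - 2
  else v - 2

/-- Rank for the second pattern. -/
def dB (k v : ℕ) : ℕ :=
  if v % 7 = 4 then 7 * k + 1 else if v % 7 = 6 then 7 * k + 2 else v

/-- Third parent pattern. -/
def pC (k v : ℕ) : ℕ :=
  if v % 7 = 0 then v - 2 else if v % 7 = 1 then 7 * k else if v % 7 = 2 then v - 2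
  else if v % 7 = 3 then 7 * k else if v % 7 = 4 then v + 2 else if v % 7 = 5 then v - 1
  else v - 4

/-- Rank for the third pattern. -/
def dC (k v : ℕ) : ℕ :=
  if v % 7 = 1 then 14 * k + 1 else if v % 7 = 3 then 14 * k + 1
  else if v % 7 = 6 then 2 * v - 7 else 2 * v

theorem mod7_cases (v : ℕ) : v % 7 = 0 ∨ v % 7 = 1 ∨ v % 7 = 2 ∨ v % 7 = 3 ∨ v % 7 = 4 ∨
    v % 7 = 5 ∨ v % 7 = 6 := by omega

theorem brA (k : ℕ) : IsOutBranching (parTree Set.univ 0 (toF k (pA k))) (RD k) 0 := by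
  refine branching_of_nat k _ (dA k) ?_
  intro v h0 h1
  unfold RArc dA pA
  rcases mod7_cases v with h | h | h | h | h | h | h <;> simp only [h] <;> norm_num <;>
    refine ⟨by omega, by omega, ?_⟩ <;> split_ifs <;> omega

theorem brB (k : ℕ) : IsOutBranching (parTree Set.univ 0 (toF k (pB k))) (RD k) 0 := by
  refine branching_of_nat k _ (dB k) ?_
  intro v h0 h1
  unfold RArc dB pB
  rcases mod7_cases v with h | h | h | h | h | h | h <;> simp only [h] <;> norm_num <;>
    refine ⟨by omega, by omega, ?_⟩ <;> split_ifs <;> omega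

theorem brC (k : ℕ) : IsOutBranching (parTree Set.univ 0 (toF k (pC k))) (RD k) 0 := by
  refine branching_of_nat k _ (dC k) ?_
  intro v h0 h1
  unfold RArc dC pC
  rcases mod7_cases v with h | h | h | h | h | h | h <;> simp only [h] <;> norm_num <;>
    first | omega | (refine ⟨by omega, by omega, ?_⟩ <;> split_ifs <;> omega)

theorem arc_of_par (k : ℕ) (p : ℕ → ℕ) (u v : Fin (7 * k + 1)) (hv : 0 < v.val)
    (h : p v.val = u.val) : (u, v) ∈ (parTree Set.univ 0 (toF k p)).arcs := by
  refine ⟨Set.mem_univ _, ?_, ?_⟩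
  · intro e
    simp only at e
    rw [e] at hv
    simp at hv
  · apply Fin.ext
    simp only
    rw [toF_val k p v (by rw [h]; exact u.is_lt), h]

theorem no_useless (k : ℕ) (a : Fin (7 * k + 1) × Fin (7 * k + 1)) (ha : a ∈ (RD k).arcs) :
    ¬ Useless (RD k) a := by
  obtain ⟨u, v⟩ := a
  intro hU
  have key : 0 < v.val ∧ (pA k v.val = u.val ∨ pB k v.val = u.val ∨ pC k v.val = u.val) := by
    have hu := u.is_lt
    have hv := v.is_lt
    simp only [RD, RArc, Set.mem_setOf_eq] at ha
    generalize u.val = x at *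
    generalize v.val = y at *
    unfold pA pB pC
    refine ⟨by omega, ?_⟩
    rcases mod7_cases y with h | h | h | h | h | h | h <;> simp only [h] <;> norm_num <;> omega
  obtain ⟨hv, h | h | h⟩ := key
  · exact hU _ _ (brA k) (arc_of_par k _ u v hv h)
  · exact hU _ _ (brB k) (arc_of_par k _ u v hv h)
  · exact hU _ _ (brC k) (arc_of_par k _ u v hv h)

/-- Counting lemma: `m` residues per gadget. -/
theorem count_le (k m : ℕ) (g : Fin m → ℕ) (hg : Function.Injective g) (hg7 : ∀ j, g j < 7)
    (L : Set (Fin (7 * k + 1)))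
    (hL : ∀ v : Fin (7 * k + 1), (∃ j, v.val % 7 = g j) → v.val < 7 * k → v ∈ L) :
    m * k ≤ L.ncard := by
  classical
  have hlt : ∀ x : Fin m × Fin k, 7 * x.2.val + g x.1 < 7 * k := by
    intro x
    have := x.2.is_lt
    have := hg7 x.1
    omega
  let F : Fin m × Fin k → Fin (7 * k + 1) := fun x => ⟨7 * x.2.val + g x.1, by
    have := hlt x
    omega⟩
  have hF : Function.Injective F := by
    rintro ⟨a, b⟩ ⟨a', b'⟩ h
    have h' : 7 * b.val + g a = 7 * b'.val + g a' := congrArg Fin.val h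
    have := hg7 a
    have := hg7 a'
    have e1 : b = b' := Fin.ext (by omega)
    have e2 : a = a' := hg (by omega)
    rw [e1, e2]
  have h1 : (Set.range F).ncard = m * k := by
    rw [← Set.image_univ, Set.ncard_image_of_injective _ hF, Set.ncard_univ]
    simp
  rw [← h1]
  refine Set.ncard_le_ncard ?_ (Set.toFinite _)
  rintro _ ⟨x, rfl⟩
  refine hL _ ⟨x.1, ?_⟩ (hlt x)
  have := hg7 x.1
  simp only [F]
  omega

theorem bdd_tree {n : ℕ} (P : DirGraph (Fin n) → Fin n → Prop) :
    BddAbove {m | ∃ (T : DirGraph (Fin n)) (r : Fin n), P T r ∧ (leaves T).ncard = m} := by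
  refine ⟨n, ?_⟩
  rintro m ⟨T, r, _, rfl⟩
  have := Set.ncard_le_card T.leaves
  simpa using this

/-- Parent function of the out-tree with many leaves. -/
def pT (k v : ℕ) : ℕ :=
  if v % 7 = 5 then v - 1 else if v % 7 = 6 then v - 2 else 7 * k

theorem pT_arc (k v : ℕ) (h1 : v ≤ 7 * k) (h2 : v ≠ 7 * k) (h3 : v % 7 ≠ 0) :
    RArc k (pT k v) v := by
  unfold pT RArc
  rcases mod7_cases v with h | h | h | h | h | h | h <;> simp only [h] <;> norm_num <;> omega

theorem big_tree (k : ℕ) : ∃ (T : DirGraph (Fin (7 * k + 1))) (r : Fin (7 * k + 1)),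
    IsOutTreeOf T (RD k) r ∧ 5 * k ≤ T.leaves.ncard := by
  let w : Fin (7 * k + 1) := ⟨7 * k, by omega⟩
  let S : Set (Fin (7 * k + 1)) := {v | v.val = 7 * k ∨ v.val % 7 ≠ 0}
  have hval : ∀ v : Fin (7 * k + 1), (toF k (pT k) v).val = pT k v.val := by
    intro v
    apply toF_val
    have := v.is_lt
    unfold pT
    split_ifs <;> omega
  have hw : ∀ v : Fin (7 * k + 1), v ≠ w → v.val ≠ 7 * k := fun v hv e => hv (Fin.ext e)
  refine ⟨parTree S w (toF k (pT k)), w, ⟨parTree_isOutTree _ _ _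
    (fun v => if v.val = 7 * k then 0 else if v.val % 7 ≤ 4 then 1 else 2) (Or.inl rfl) ?_,
    Set.subset_univ _, ?_⟩, ?_⟩
  · intro v hv hvw
    have h1 := hw v hvw
    have hlt := v.is_lt
    simp only [S, Set.mem_setOf_eq] at hv ⊢
    rw [hval v]
    unfold pT
    constructor
    · split_ifs <;> omega
    · rcases mod7_cases v.val with h | h | h | h | h | h | h <;> simp only [h, h1] <;>
        norm_num <;> (try split_ifs) <;> omega
  · rintro ⟨u, v⟩ ⟨h1, h2, h3⟩
    simp only at h1 h2 h3
    have h4 := hw v h2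
    have hu : u.val = pT k v.val := by rw [h3, hval]
    have hlt := v.is_lt
    simp only [S, Set.mem_setOf_eq] at h1
    have := pT_arc k v.val (by omega) h4 (by omega)
    rw [← hu] at this
    exact this
  · refine count_le k 5 ![1, 2, 3, 5, 6] (by decide) (by decide) _ ?_
    intro v hv hlt
    have hv' : v.val % 7 = 1 ∨ v.val % 7 = 2 ∨ v.val % 7 = 3 ∨ v.val % 7 = 5 ∨ v.val % 7 = 6 := by
      simpa [Fin.exists_fin_succ] using hv
    refine leaf_of_no_arc (Or.inr (by omega)) ?_
    rintro x ⟨h1, h2, h3⟩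
    simp only at h1 h2 h3
    have hu : v.val = pT k x.val := by rw [h3, hval]
    unfold pT at hu
    split_ifs at hu <;> omega

theorem brC_leaves (k : ℕ) :
    2 * k ≤ (parTree Set.univ 0 (toF k (pC k))).leaves.ncard := by
  refine count_le k 2 ![1, 3] (by decide) (by decide) _ ?_
  intro v hv hlt
  have hv' : v.val % 7 = 1 ∨ v.val % 7 = 3 := by
    simpa [Fin.exists_fin_succ] using hv
  refine leaf_of_no_arc (Set.mem_univ _) ?_
  rintro x ⟨h1, h2, h3⟩
  simp only at h1 h2 h3
  have hx : x.val ≠ 0 := fun e => h2 (Fin.ext e)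
  have hlx := x.is_lt
  have hval : (toF k (pC k) x).val = pC k x.val := by
    apply toF_val
    unfold pC
    split_ifs <;> omega
  have hu : v.val = pC k x.val := by rw [h3, hval]
  unfold pC at hu
  split_ifs at hu <;> omega

theorem exists_digraph_ratio_two_point_five (k : ℕ) (hk : 1 ≤ k) :
    ∃ (n : ℕ) (D : DirGraph (Fin n)),
      D.WellFormed ∧ D.verts = Set.univ ∧
      (∃ (T : DirGraph (Fin n)) (r : Fin n), IsOutBranching T D r) ∧
      (∀ a ∈ D.arcs, ¬ Useless D a) ∧
      5 * k ≤ ell D ∧ ellS D = 2 * k := by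
  refine ⟨7 * k + 1, RD k, ?_, rfl, ⟨_, _, brA k⟩, no_useless k, ?_, ?_⟩
  · rintro ⟨u, v⟩ ha
    refine ⟨Set.mem_univ _, Set.mem_univ _, ?_⟩
    intro e
    simp only at e
    subst e
    simp only [RD, RArc, Set.mem_setOf_eq] at ha
    omega
  · obtain ⟨T, r, h1, h2⟩ := big_tree k
    exact h2.trans (le_csSup (bdd_tree (fun T r => IsOutTreeOf T (RD k) r)) ⟨T, r, h1, rfl⟩)
  · apply le_antisymm
    · refine csSup_le ⟨_, _, _, brC k, rfl⟩ ?_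
      rintro m ⟨T, r, h, rfl⟩
      exact branching_leaves_le k hk T r h
    · exact (brC_leaves k).trans
        (le_csSup (bdd_tree (fun T r => IsOutBranching T (RD k) r)) ⟨_, _, brC k, rfl⟩)

end DirGraph
end
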